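/- arXiv:0903.3395 — 3 statements merged into one kernel-verified Lean document; each statement's English description precedes it below -/
import Mathlib

section
/- Let m, n be positive integers and let (λ_i)_{i ∈ M(m+1,n)} be a family of complex numbers that is symmetric, i.e. λ_i = λ_j whenever i and j are permutations of each other. Then for every coordinate k ∈ {0,1,…,m}, one has ∑_{i_k=1}^n ( ∑_{i^k} |i| · |λ_i|² )^{1/2} ≤ (√2)^m · √(m+1) · sup_{z^{(0)},…,z^{(m)} ∈ 𝔻^n} | ∑_{i ∈ M(m+1,n)} λ_i · z^{(0)}_{i_0} z^{(1)}_{i_1} ⋯ z^{(m)}_{i_m} |. -/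
open Finset

/-- `|i|`, the cardinality of the equivalence class of the multi-index `i` under
permutation of its coordinates. -/
noncomputable def classCard {m n : ℕ} (i : Fin m → Fin n) : ℕ :=
  Nat.card {j : Fin m → Fin n // ∃ σ : Equiv.Perm (Fin m), j = i ∘ σ}

open MeasureTheory

namespace MixedNorm

noncomputable section

instance : MeasurableSpace Circle := borel Circle
instance : BorelSpace Circle := ⟨rfl⟩

/-- Normalised Haar measure on the circle. -/
def nu : Measure Circle := Measure.haarMeasure ⊤

instance : IsProbabilityMeasure nu :=
  ⟨by
    have h := Measure.haarMeasure_self (K₀ := (⊤ : TopologicalSpace.PositiveCompacts Circle))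
    simpa [nu] using h⟩

instance : nu.IsMulLeftInvariant := by unfold nu; infer_instance

lemma integral_zpow (a : ℤ) (ha : a ≠ 0) : ∫ z : Circle, ((z : ℂ) ^ a) ∂nu = 0 := by
  let w : Circle := Circle.exp (Real.pi / a)
  have hw : (w : ℂ) ^ a = -1 := by
    have : w ^ a = Circle.exp (Real.pi) := by
      rw [← Circle.exp_zsmul]
      congr 1
      have : (a : ℝ) ≠ 0 := by exact_mod_cast ha
      simp; field_simp
    rw [← Circle.coe_zpow, this]
    simp
  have h := integral_mul_left_eq_self (μ := nu) (fun z : Circle => ((z : ℂ) ^ a)) w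
  simp only [Circle.coe_mul, mul_zpow, hw] at h
  rw [integral_const_mul] at h
  linear_combination (-1/2 : ℂ) * h

lemma integral_orth (a b : ℕ) :
    ∫ z : Circle, ((z : ℂ) ^ a * (starRingEnd ℂ) ((z : ℂ) ^ b)) ∂nu = if a = b then 1 else 0 := by
  have h : ∀ z : Circle, ((z : ℂ) ^ a * (starRingEnd ℂ) ((z : ℂ) ^ b)) = (z : ℂ) ^ ((a : ℤ) - b) := by
    intro z
    have : (z : ℂ) ≠ 0 := z.coe_ne_zero
    rw [map_pow, ← Circle.coe_inv_eq_conj, zpow_sub₀ this]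
    simp [div_eq_mul_inv]
  simp_rw [h]
  split_ifs with hab
  · subst hab; simp
  · exact integral_zpow _ (by omega)

lemma integrable_of_cont {X E : Type*} [TopologicalSpace X] [CompactSpace X] [MeasurableSpace X]
    [OpensMeasurableSpace X] [NormedAddCommGroup E] {μ : Measure X} [IsFiniteMeasure μ]
    {f : X → E} (hf : Continuous f) : Integrable f μ :=
  hf.integrable_of_hasCompactSupport (HasCompactSupport.of_compactSpace f)

lemma cauchy_schwarz {X : Type*} [TopologicalSpace X] [CompactSpace X] [MeasurableSpace X]
    [OpensMeasurableSpace X] {μ : Measure X} [IsFiniteMeasure μ]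
    {f g : X → ℝ} (hf : Continuous f) (hg : Continuous g) :
    ∫ x, f x * g x ∂μ ≤ √(∫ x, f x ^ 2 ∂μ) * √(∫ x, g x ^ 2 ∂μ) := by
  have h1 : ∀ t : ℝ, 0 ≤ (∫ x, g x ^ 2 ∂μ) * (t * t) + (-2 * ∫ x, f x * g x ∂μ) * t
      + ∫ x, f x ^ 2 ∂μ := by
    intro t
    have : ∫ x, (f x - t * g x) ^ 2 ∂μ = (∫ x, g x ^ 2 ∂μ) * (t * t)
        + (-2 * ∫ x, f x * g x ∂μ) * t + ∫ x, f x ^ 2 ∂μ := by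
      have e : ∀ x, (f x - t * g x) ^ 2 = (t * t) * g x ^ 2 + (-2 * t) * (f x * g x) + f x ^ 2 := by
        intro x; ring
      simp_rw [e]
      rw [integral_add (integrable_of_cont (by fun_prop)) (integrable_of_cont (by fun_prop)),
        integral_add (integrable_of_cont (by fun_prop)) (integrable_of_cont (by fun_prop)),
        integral_const_mul, integral_const_mul]
      ring
    rw [← this]
    exact integral_nonneg fun x => sq_nonneg _
  have h2 := discrim_le_zero h1
  rw [← Real.sqrt_mul (integral_nonneg fun x => sq_nonneg _)]
  apply Real.le_sqrt_of_sq_le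
  unfold discrim at h2
  nlinarith

lemma continuous_integral_param {X Y : Type*} [TopologicalSpace X] [TopologicalSpace Y]
    [CompactSpace Y] [MeasurableSpace Y] [OpensMeasurableSpace Y] {μ : Measure Y}
    [IsFiniteMeasure μ] [FirstCountableTopology X] [LocallyCompactSpace X]
    {f : X → Y → ℝ} (hf : Continuous (Function.uncurry f)) :
    Continuous fun x => ∫ y, f x y ∂μ := by
  have := continuous_parametric_integral_of_continuous (μ := μ) hf isCompact_univ
  simpa using this

/-- Parseval for polynomials. -/
lemma parseval (G : Polynomial ℂ) :
    ∫ z : Circle, ‖G.eval (z : ℂ)‖ ^ 2 ∂nu = ∑ k ∈ Finset.range (G.natDegree + 1), ‖G.coeff k‖ ^ 2 := by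
  have h : ((∫ z : Circle, ‖G.eval (z : ℂ)‖ ^ 2 ∂nu : ℝ) : ℂ)
      = ((∑ k ∈ Finset.range (G.natDegree + 1), ‖G.coeff k‖ ^ 2 : ℝ) : ℂ) := by
    rw [← integral_complex_ofReal]
    have e : ∀ z : Circle, ((‖G.eval (z : ℂ)‖ ^ 2 : ℝ) : ℂ)
        = ∑ k ∈ Finset.range (G.natDegree + 1), ∑ l ∈ Finset.range (G.natDegree + 1),
          (G.coeff k * (starRingEnd ℂ) (G.coeff l)) *
            ((z : ℂ) ^ k * (starRingEnd ℂ) ((z : ℂ) ^ l)) := by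
      intro z
      push_cast
      rw [← Complex.mul_conj', Polynomial.eval_eq_sum_range, map_sum, Finset.sum_mul_sum]
      refine Finset.sum_congr rfl fun k _ => Finset.sum_congr rfl fun l _ => ?_
      rw [map_mul]; ring
    simp_rw [e]
    rw [integral_finsetSum _ fun k _ => integrable_of_cont (by fun_prop)]
    push_cast
    refine Finset.sum_congr rfl fun k hk => ?_
    rw [integral_finsetSum _ fun l _ => integrable_of_cont (by fun_prop)]
    have e2 : ∀ l, ∫ z : Circle, (G.coeff k * (starRingEnd ℂ) (G.coeff l)) *
            ((z : ℂ) ^ k * (starRingEnd ℂ) ((z : ℂ) ^ l)) ∂nu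
            = (G.coeff k * (starRingEnd ℂ) (G.coeff l)) * (if k = l then 1 else 0) := by
      intro l
      rw [integral_const_mul, integral_orth]
    simp_rw [e2]
    simp only [mul_ite, mul_one, mul_zero, Finset.sum_ite_eq, hk, if_true]
    rw [Complex.mul_conj']
  exact_mod_cast h

/-- The dilation factor `1/√2`. -/
def rr : ℝ := (√2)⁻¹

lemma rr_nonneg : 0 ≤ rr := by unfold rr; positivity
lemma rr_sq : rr ^ 2 = 1 / 2 := by unfold rr; rw [inv_pow, Real.sq_sqrt (by norm_num)]; norm_num
lemma rr_lt_one : rr < 1 := by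
  have := rr_sq; have := rr_nonneg; nlinarith

lemma poly_ineq (G : Polynomial ℂ) :
    ∫ z : Circle, ‖G.eval ((rr : ℂ) * z)‖ ^ 4 ∂nu ≤ (∫ z : Circle, ‖G.eval (z : ℂ)‖ ^ 2 ∂nu) ^ 2 := by
  set H : Polynomial ℂ := (G * G).comp (Polynomial.C (rr : ℂ) * Polynomial.X) with hH
  have e : ∀ z : Circle, ‖G.eval ((rr : ℂ) * z)‖ ^ 4 = ‖H.eval (z : ℂ)‖ ^ 2 := by
    intro z
    simp only [hH, Polynomial.eval_comp, Polynomial.eval_mul, Polynomial.eval_C, Polynomial.eval_X,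
      norm_mul]
    ring
  simp_rw [e]
  rw [parseval, parseval]
  set A : Polynomial ℝ := ∑ k ∈ Finset.range (G.natDegree + 1),
    Polynomial.monomial k (‖G.coeff k‖ ^ 2) with hA
  have hAc : ∀ k, A.coeff k = ‖G.coeff k‖ ^ 2 := by
    intro k
    rw [hA, Polynomial.finsetSum_coeff]
    simp only [Polynomial.coeff_monomial, Finset.sum_ite_eq', Finset.mem_range]
    split_ifs with h
    · rfl
    · rw [Polynomial.coeff_eq_zero_of_natDegree_lt (by omega)]; simp
  have hA1 : A.eval 1 = ∑ k ∈ Finset.range (G.natDegree + 1), ‖G.coeff k‖ ^ 2 := by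
    rw [hA, Polynomial.eval_finsetSum]; simp
  have hk : ∀ k, ‖H.coeff k‖ ^ 2 ≤ (A * A).coeff k := by
    intro k
    rw [hH, Polynomial.comp_C_mul_X_coeff, Polynomial.coeff_mul, Polynomial.coeff_mul, norm_mul,
      mul_pow]
    have h1 : ‖((rr : ℂ)) ^ k‖ ^ 2 = (1 / 2) ^ k := by
      rw [norm_pow, Complex.norm_real, Real.norm_of_nonneg rr_nonneg, ← pow_mul, mul_comm, pow_mul,
        rr_sq]
    have h2 : ‖∑ x ∈ Finset.HasAntidiagonal.antidiagonal k, G.coeff x.1 * G.coeff x.2‖ ^ 2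
        ≤ (k + 1 : ℝ) * ∑ x ∈ Finset.HasAntidiagonal.antidiagonal k, ‖G.coeff x.1 * G.coeff x.2‖ ^ 2 := by
      calc _ ≤ (∑ x ∈ Finset.HasAntidiagonal.antidiagonal k, ‖G.coeff x.1 * G.coeff x.2‖) ^ 2 := by
            gcongr; exact norm_sum_le _ _
        _ ≤ _ := by
            have := sq_sum_le_card_mul_sum_sq (s := Finset.HasAntidiagonal.antidiagonal k)
              (f := fun x => ‖G.coeff x.1 * G.coeff x.2‖)
            simpa using this
    have h3 : (k + 1 : ℝ) ≤ 2 ^ k := by exact_mod_cast Nat.lt_two_pow_self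
    rw [h1]
    simp_rw [hAc, ← mul_pow, ← norm_mul]
    set S := ∑ x ∈ Finset.HasAntidiagonal.antidiagonal k, ‖G.coeff x.1 * G.coeff x.2‖ ^ 2
    have hS : 0 ≤ S := Finset.sum_nonneg fun _ _ => sq_nonneg _
    calc _ ≤ ((k + 1 : ℝ) * S) * (1 / 2) ^ k := by gcongr
      _ ≤ (2 ^ k * S) * (1 / 2) ^ k := by gcongr
      _ = S := by rw [one_div, inv_pow]; field_simp
  have hnn : ∀ k, 0 ≤ (A * A).coeff k := fun k => (sq_nonneg _).trans (hk k)
  rw [← hA1, sq, ← Polynomial.eval_mul]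
  rw [Polynomial.eval_eq_sum_range' (n := max (H.natDegree + 1) ((A * A).natDegree + 1)) (by omega)]
  simp only [one_pow, mul_one]
  refine (Finset.sum_le_sum fun k _ => hk k).trans ?_
  exact Finset.sum_le_sum_of_subset_of_nonneg
    (Finset.range_subset_range.2 (le_max_left _ _)) fun k _ _ => hnn k

lemma holo_ineq (g : ℂ → ℂ) (hg : DifferentiableOn ℂ g (Metric.ball 0 1)) (R : ℝ) (hR0 : 0 ≤ R)
    (hR : R < 1) :
    ∫ z : Circle, ‖g ((R : ℂ) * ((rr : ℂ) * z))‖ ^ 4 ∂nu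
      ≤ (∫ z : Circle, ‖g ((R : ℂ) * z)‖ ^ 2 ∂nu) ^ 2 := by
  set a : ℕ → ℂ := fun k => ((k.factorial : ℂ))⁻¹ * (R : ℂ) ^ k * iteratedDeriv k g 0 with ha
  have hs : ∀ w : ℂ, ‖w‖ ≤ 1 → HasSum (fun k => a k * w ^ k) (g ((R : ℂ) * w)) := by
    intro w hw
    have hmem : (R : ℂ) * w ∈ Metric.ball (0 : ℂ) 1 := by
      rw [mem_ball_zero_iff, norm_mul, Complex.norm_real, Real.norm_of_nonneg hR0]
      nlinarith [norm_nonneg w]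
    have h := Complex.hasSum_taylorSeries_on_ball hg hmem
    have e : (fun k => a k * w ^ k) = fun n : ℕ =>
        ((n.factorial : ℂ))⁻¹ • ((R : ℂ) * w - 0) ^ n • iteratedDeriv n g 0 := by
      funext k
      simp only [ha, sub_zero, smul_eq_mul, mul_pow]
      ring
    rw [e]
    exact h
  have hsn : Summable fun k => ‖a k‖ := by
    have := (hs 1 (by simp)).summable
    simpa using this.norm
  set M := ∑' k, ‖a k‖
  let G : ℕ → Polynomial ℂ := fun N => ∑ k ∈ Finset.range N, Polynomial.monomial k (a k)
  have hG : ∀ N w, (G N).eval w = ∑ k ∈ Finset.range N, a k * w ^ k := by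
    intro N w
    simp [G, Polynomial.eval_finsetSum]
  have hb : ∀ N w, ‖w‖ ≤ 1 → ‖(G N).eval w‖ ≤ M := by
    intro N w hw
    rw [hG]
    refine (norm_sum_le _ _).trans ((Finset.sum_le_sum fun k _ => ?_).trans
      (hsn.sum_le_tsum (Finset.range N) fun _ _ => norm_nonneg _))
    rw [norm_mul, norm_pow]
    exact mul_le_of_le_one_right (norm_nonneg _) (pow_le_one₀ (norm_nonneg _) hw)
  have ht : ∀ w : ℂ, ‖w‖ ≤ 1 →
      Filter.Tendsto (fun N => (G N).eval w) Filter.atTop (nhds (g ((R : ℂ) * w))) := by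
    intro w hw
    simp_rw [hG]
    exact (hs w hw).tendsto_sum_nat
  have hrz : ∀ z : Circle, ‖(rr : ℂ) * z‖ ≤ 1 := by
    intro z
    rw [norm_mul, Complex.norm_real, Real.norm_of_nonneg rr_nonneg, Circle.norm_coe, mul_one]
    exact rr_lt_one.le
  have hz1 : ∀ z : Circle, ‖(z : ℂ)‖ ≤ 1 := fun z => (Circle.norm_coe z).le
  have t1 : Filter.Tendsto (fun N => ∫ z : Circle, ‖(G N).eval ((rr : ℂ) * z)‖ ^ 4 ∂nu) Filter.atTop
      (nhds (∫ z : Circle, ‖g ((R : ℂ) * ((rr : ℂ) * z))‖ ^ 4 ∂nu)) := by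
    refine tendsto_integral_of_dominated_convergence (fun _ => M ^ 4) (fun N => ?_)
      (integrable_const _) (fun N => ?_) ?_
    · exact (integrable_of_cont (by fun_prop)).aestronglyMeasurable
    · refine Filter.Eventually.of_forall fun z => ?_
      rw [norm_pow, norm_norm]
      gcongr
      exact hb N _ (hrz z)
    · exact Filter.Eventually.of_forall fun z => ((ht _ (hrz z)).norm.pow 4)
  have t2 : Filter.Tendsto (fun N => ∫ z : Circle, ‖(G N).eval (z : ℂ)‖ ^ 2 ∂nu) Filter.atTop
      (nhds (∫ z : Circle, ‖g ((R : ℂ) * z)‖ ^ 2 ∂nu)) := by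
    refine tendsto_integral_of_dominated_convergence (fun _ => M ^ 2) (fun N => ?_)
      (integrable_const _) (fun N => ?_) ?_
    · exact (integrable_of_cont (by fun_prop)).aestronglyMeasurable
    · refine Filter.Eventually.of_forall fun z => ?_
      rw [norm_pow, norm_norm]
      gcongr
      exact hb N _ (hz1 z)
    · exact Filter.Eventually.of_forall fun z => ((ht _ (hz1 z)).norm.pow 2)
  exact le_of_tendsto_of_tendsto' t1 (t2.pow 2) fun N => poly_ineq (G N)

/-- Functions dominated by the square of a holomorphic function, with equality on the circle. -/
def Good (f : ℂ → ℂ) : Prop :=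
  ∃ g F : ℂ → ℂ, DifferentiableOn ℂ g (Metric.ball 0 1) ∧ Continuous F ∧
    (∀ z, ‖z‖ < 1 → F z = g z ^ 2) ∧ (∀ z, ‖z‖ < 1 → ‖f z‖ ≤ ‖F z‖) ∧
    (∀ z, ‖z‖ = 1 → ‖F z‖ = ‖f z‖)

lemma Good.mul {f₁ f₂ : ℂ → ℂ} (h₁ : Good f₁) (h₂ : Good f₂) : Good (fun z => f₁ z * f₂ z) := by
  obtain ⟨g, F, a1, a2, a3, a4, a5⟩ := h₁
  obtain ⟨g', F', b1, b2, b3, b4, b5⟩ := h₂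
  refine ⟨fun z => g z * g' z, fun z => F z * F' z, a1.mul b1, a2.mul b2, fun z hz => ?_,
    fun z hz => ?_, fun z hz => ?_⟩
  · simp only [a3 z hz, b3 z hz]; ring
  · rw [norm_mul, norm_mul]
    exact mul_le_mul (a4 z hz) (b4 z hz) (norm_nonneg _) (norm_nonneg _)
  · rw [norm_mul, norm_mul, a5 z hz, b5 z hz]

lemma sqrt_sq' (c : ℂ) : c = (c ^ ((2 : ℕ) : ℂ)⁻¹) ^ 2 :=
  (Complex.cpow_nat_inv_pow c (by norm_num)).symm

lemma good_const (c : ℂ) : Good (fun _ => c) :=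
  ⟨fun _ => c ^ ((2 : ℕ) : ℂ)⁻¹, fun _ => c, differentiableOn_const _, continuous_const,
    fun _ _ => sqrt_sq' c, fun _ _ => le_rfl, fun _ _ => rfl⟩

lemma diff_sqrt (β : ℂ) (hβ : ‖β‖ ≤ 1) :
    DifferentiableOn ℂ (fun z : ℂ => (1 - β * z) ^ ((2 : ℕ) : ℂ)⁻¹) (Metric.ball 0 1) := by
  intro z hz
  rw [mem_ball_zero_iff] at hz
  apply DifferentiableAt.differentiableWithinAt
  apply DifferentiableAt.cpow_const (by fun_prop)
  left
  have : (β * z).re ≤ ‖β * z‖ := Complex.re_le_norm _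
  rw [norm_mul] at this
  simp only [Complex.sub_re, Complex.one_re]
  nlinarith [norm_nonneg z, norm_nonneg β]

lemma normSq_ident (α z : ℂ) : ‖1 - (starRingEnd ℂ) α * z‖ ^ 2 - ‖z - α‖ ^ 2
    = (1 - ‖α‖ ^ 2) * (1 - ‖z‖ ^ 2) := by
  simp only [← Complex.normSq_eq_norm_sq, Complex.normSq_apply]
  simp
  ring

lemma good_linear (α : ℂ) : Good (fun z => z - α) := by
  by_cases hα : ‖α‖ ≤ 1
  · refine ⟨_, fun z => 1 - (starRingEnd ℂ) α * z, diff_sqrt ((starRingEnd ℂ) α) (by simpa using hα),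
      by fun_prop, fun z _ => sqrt_sq' _, fun z hz => ?_, fun z hz => ?_⟩
    · have := normSq_ident α z
      refine (pow_le_pow_iff_left₀ (norm_nonneg _) (norm_nonneg _) two_ne_zero).1 ?_
      have h1 : 0 ≤ 1 - ‖α‖ ^ 2 := by nlinarith [norm_nonneg α]
      have h2 : 0 ≤ 1 - ‖z‖ ^ 2 := by nlinarith [norm_nonneg z]
      nlinarith [mul_nonneg h1 h2]
    · have := normSq_ident α z
      rw [hz] at this
      have h : ‖1 - (starRingEnd ℂ) α * z‖ ^ 2 = ‖z - α‖ ^ 2 := by linarith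
      exact (pow_left_inj₀ (norm_nonneg _) (norm_nonneg _) (by norm_num)).1 h
  · have hα' : 1 < ‖α‖ := not_le.1 hα
    have h0 : α ≠ 0 := by
      intro h; simp [h] at hα'; linarith
    refine ⟨fun z => (-α) ^ ((2 : ℕ) : ℂ)⁻¹ * (1 - α⁻¹ * z) ^ ((2 : ℕ) : ℂ)⁻¹, fun z => z - α,
      (diff_sqrt α⁻¹ ?_).const_mul _, by fun_prop, fun z _ => ?_, fun z hz => le_rfl, fun z hz => rfl⟩
    · rw [norm_inv]; exact inv_le_one_of_one_le₀ hα'.le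
    · rw [mul_pow, ← sqrt_sq', ← sqrt_sq']
      field_simp
      ring

lemma good_poly (p : Polynomial ℂ) : Good (fun z => p.eval z) := by
  have h := (IsAlgClosed.splits p).eq_prod_roots
  have h2 : ∀ s : Multiset ℂ, Good (fun z =>
      ((s.map (fun x => Polynomial.X - Polynomial.C x)).prod).eval z) := by
    intro s
    induction s using Multiset.induction with
    | empty => simpa using good_const 1
    | cons a s ih =>
      have := (good_linear a).mul ih
      simpa using this
  have h3 := (good_const p.leadingCoeff).mul (h2 p.roots)
  rw [h]
  simpa only [Polynomial.eval_mul, Polynomial.eval_C] using h3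

lemma one_var {f : ℂ → ℂ} (hc : Continuous f) (hf : Good f) :
    ∫ z : Circle, ‖f ((rr : ℂ) * z)‖ ^ 2 ∂nu ≤ (∫ z : Circle, ‖f (z : ℂ)‖ ∂nu) ^ 2 := by
  obtain ⟨g, F, hg, hF, h1, h2, h3⟩ := hf
  have key : ∀ R : ℝ, 0 ≤ R → R < 1 →
      ∫ z : Circle, ‖F ((R : ℂ) * ((rr : ℂ) * z))‖ ^ 2 ∂nu
        ≤ (∫ z : Circle, ‖F ((R : ℂ) * z)‖ ∂nu) ^ 2 := by
    intro R hR0 hR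
    have hh := holo_ineq g hg R hR0 hR
    have e1 : ∀ z : Circle, ‖F ((R : ℂ) * ((rr : ℂ) * z))‖ ^ 2 = ‖g ((R : ℂ) * ((rr : ℂ) * z))‖ ^ 4 := by
      intro z
      rw [h1, norm_pow]; · ring
      rw [norm_mul, norm_mul, Complex.norm_real, Complex.norm_real, Real.norm_of_nonneg hR0,
        Real.norm_of_nonneg rr_nonneg, Circle.norm_coe, mul_one]
      nlinarith [rr_lt_one, rr_nonneg]
    have e2 : ∀ z : Circle, ‖F ((R : ℂ) * z)‖ = ‖g ((R : ℂ) * z)‖ ^ 2 := by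
      intro z
      rw [h1, norm_pow]
      rw [norm_mul, Complex.norm_real, Real.norm_of_nonneg hR0, Circle.norm_coe, mul_one]
      exact hR
    simp_rw [e1, e2]
    exact hh
  have c1 : Continuous fun R : ℝ => ∫ z : Circle, ‖F ((R : ℂ) * ((rr : ℂ) * z))‖ ^ 2 ∂nu :=
    continuous_integral_param (by simp only [Function.uncurry_def]; fun_prop)
  have c2 : Continuous fun R : ℝ => (∫ z : Circle, ‖F ((R : ℂ) * z)‖ ∂nu) ^ 2 :=
    (continuous_integral_param (by simp only [Function.uncurry_def]; fun_prop)).pow 2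
  have lim : ∫ z : Circle, ‖F (((1 : ℝ) : ℂ) * ((rr : ℂ) * z))‖ ^ 2 ∂nu
        ≤ (∫ z : Circle, ‖F (((1 : ℝ) : ℂ) * z)‖ ∂nu) ^ 2 := by
    refine le_of_tendsto_of_tendsto (b := nhdsWithin (1 : ℝ) (Set.Iio 1))
      ((c1.tendsto 1).mono_left nhdsWithin_le_nhds)
      ((c2.tendsto 1).mono_left nhdsWithin_le_nhds) ?_
    have : Set.Ioo (0 : ℝ) 1 ∈ nhdsWithin (1 : ℝ) (Set.Iio 1) := Ioo_mem_nhdsLT (by norm_num)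
    filter_upwards [this] with R hR
    exact key R hR.1.le hR.2
  simp only [Complex.ofReal_one, one_mul] at lim
  have e3 : ∀ z : Circle, ‖F (z : ℂ)‖ = ‖f z‖ := fun z => h3 z (Circle.norm_coe z)
  simp_rw [e3] at lim
  refine le_trans (integral_mono (integrable_of_cont (by fun_prop))
    (integrable_of_cont (by fun_prop)) fun z => ?_) lim
  have : ‖(rr : ℂ) * z‖ < 1 := by
    rw [norm_mul, Complex.norm_real, Real.norm_of_nonneg rr_nonneg, Circle.norm_coe, mul_one]
    exact rr_lt_one
  have := h2 _ this
  dsimp only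
  gcongr

/-- Product measure on the torus. -/
def mu (n : ℕ) : Measure (Fin n → Circle) := Measure.pi fun _ => nu

instance (n : ℕ) : IsProbabilityMeasure (mu n) := by unfold mu; infer_instance

lemma integral_succ {n : ℕ} (F : (Fin (n + 1) → Circle) → ℝ) (hF : Continuous F) :
    ∫ z, F z ∂(mu (n + 1)) = ∫ w : Circle, ∫ z, F (Fin.cons w z) ∂(mu n) ∂nu := by
  have h := (measurePreserving_piFinSuccAbove (fun _ : Fin (n + 1) => nu) 0).symm
  have h2 := h.integral_comp' (g := F)
  have h3 : ∀ x : Circle × (Fin n → Circle),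
      (MeasurableEquiv.piFinSuccAbove (fun _ : Fin (n + 1) => Circle) 0).symm x
        = Fin.cons x.1 x.2 := by
    intro x
    simp [MeasurableEquiv.piFinSuccAbove, Fin.insertNthEquiv]
  simp_rw [h3] at h2
  unfold mu
  rw [← h2]
  have hc : Continuous fun x : Circle × (Fin n → Circle) =>
      F (Fin.cons x.1 x.2 : Fin (n + 1) → Circle) := by
    apply hF.comp
    apply Continuous.finCons <;> fun_prop
  rw [integral_prod]
  exact integrable_of_cont hc

/-- Continuous functions, polynomial in every variable. -/
def SepPoly {n : ℕ} (P : (Fin n → ℂ) → ℂ) : Prop :=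
  Continuous P ∧ ∀ z v, ∃ p : Polynomial ℂ, ∀ w, P (Function.update z v w) = p.eval w

lemma SepPoly.cons {n : ℕ} {P : (Fin (n + 1) → ℂ) → ℂ} (hP : SepPoly P) (w : ℂ) :
    SepPoly fun z : Fin n → ℂ => P (Fin.cons w z) := by
  refine ⟨hP.1.comp (Continuous.finCons (by fun_prop) (by fun_prop)), fun z v => ?_⟩
  obtain ⟨p, hp⟩ := hP.2 (Fin.cons w z) v.succ
  refine ⟨p, fun x => ?_⟩
  rw [← hp]
  dsimp only
  rw [Fin.cons_update]

lemma SepPoly.first {n : ℕ} {P : (Fin (n + 1) → ℂ) → ℂ} (hP : SepPoly P) (z : Fin n → ℂ) :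
    ∃ p : Polynomial ℂ, ∀ w, P (Fin.cons w z) = p.eval w := by
  obtain ⟨p, hp⟩ := hP.2 (Fin.cons 0 z) 0
  refine ⟨p, fun x => ?_⟩
  rw [← hp, Fin.update_cons_zero]

lemma coe_cons {n : ℕ} (w : Circle) (z : Fin n → Circle) :
    (fun t => (((Fin.cons w z : Fin (n + 1) → Circle) t : Circle) : ℂ))
      = (Fin.cons (w : ℂ) (fun t => (z t : ℂ)) : Fin (n + 1) → ℂ) := by
  funext t
  refine Fin.cases ?_ (fun i => ?_) t <;> simp

lemma smul_cons {n : ℕ} (w : Circle) (z : Fin n → Circle) :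
    (fun t => (rr : ℂ) * (((Fin.cons w z : Fin (n + 1) → Circle) t : Circle) : ℂ))
      = (Fin.cons ((rr : ℂ) * w) (fun t => (rr : ℂ) * (z t : ℂ)) : Fin (n + 1) → ℂ) := by
  funext t
  refine Fin.cases ?_ (fun i => ?_) t <;> simp

lemma tensor (n : ℕ) (P : (Fin n → ℂ) → ℂ) (hP : SepPoly P) :
    ∫ z, ‖P (fun t => (rr : ℂ) * (z t : ℂ))‖ ^ 2 ∂(mu n)
      ≤ (∫ z, ‖P (fun t => (z t : ℂ))‖ ∂(mu n)) ^ 2 := by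
  induction n with
  | zero =>
    have e : ∀ x : Fin 0 → ℂ, P x = P 0 := fun x => congrArg P (Subsingleton.elim _ _)
    have e1 : ∀ z : Fin 0 → Circle, P (fun t => (rr : ℂ) * (z t : ℂ)) = P 0 := fun z => e _
    have e2 : ∀ z : Fin 0 → Circle, P (fun t => (z t : ℂ)) = P 0 := fun z => e _
    simp_rw [e1, e2]
    simp
  | succ n ih =>
    have hPc := hP.1
    rw [integral_succ _ (by fun_prop), integral_succ _ (by fun_prop)]
    simp_rw [coe_cons, smul_cons]
    have hPcons : Continuous fun x : ℂ × (Fin n → ℂ) => P (Fin.cons x.1 x.2) :=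
      hPc.comp (Continuous.finCons (by fun_prop) (by fun_prop))
    have hcomp : ∀ {X : Type} [TopologicalSpace X] (a : X → ℂ) (b : X → Fin n → ℂ),
        Continuous a → Continuous b → Continuous fun x => P (Fin.cons (a x) (b x)) := by
      intro X _ a b ha hb
      exact hPcons.comp (ha.prodMk hb)
    let h : Circle → (Fin n → Circle) → ℝ := fun w z =>
      ‖P (Fin.cons ((rr : ℂ) * w) (fun t => (z t : ℂ)))‖
    have hh : Continuous (Function.uncurry h) := by
      simp only [Function.uncurry_def, h]
      exact (hcomp _ _ (by fun_prop) (by fun_prop)).norm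
    let H : Circle → ℝ := fun w => ∫ z, h w z ∂(mu n)
    have hH : Continuous H := continuous_integral_param hh
    let q : (Fin n → Circle) → ℝ := fun z =>
      ∫ w : Circle, ‖P (Fin.cons (w : ℂ) (fun t => (z t : ℂ)))‖ ∂nu
    have hu : Continuous (Function.uncurry fun (z : Fin n → Circle) (w : Circle) =>
        ‖P (Fin.cons (w : ℂ) (fun t => (z t : ℂ)))‖) := by
      simp only [Function.uncurry_def]
      exact (hcomp _ _ (by fun_prop) (by fun_prop)).norm
    have hq : Continuous q := continuous_integral_param hu
    have step1 : ∫ w : Circle, ∫ z, ‖P (Fin.cons ((rr : ℂ) * w) (fun t => (rr : ℂ) * (z t : ℂ)))‖ ^ 2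
        ∂(mu n) ∂nu ≤ ∫ w, H w ^ 2 ∂nu := by
      refine integral_mono (integrable_of_cont ?_) (integrable_of_cont (by fun_prop)) fun w => ?_
      · refine continuous_integral_param ?_
        simp only [Function.uncurry_def]
        exact (hcomp _ _ (by fun_prop) (by fun_prop)).norm.pow 2
      · exact ih _ (hP.cons ((rr : ℂ) * w))
    have step2 : ∫ w, H w ^ 2 ∂nu = ∫ z, ∫ w, H w * h w z ∂nu ∂(mu n) := by
      rw [← integral_integral_swap_of_hasCompactSupport (f := fun w z => H w * h w z) ?_
        (HasCompactSupport.of_compactSpace _)]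
      · refine integral_congr_ae (Filter.Eventually.of_forall fun w => ?_)
        simp only [integral_const_mul]
        rw [sq]
      · simp only [Function.uncurry_def]
        exact (hH.comp continuous_fst).mul hh
    have step3 : ∀ z, ∫ w, H w * h w z ∂nu ≤ √(∫ w, H w ^ 2 ∂nu) * q z := by
      intro z
      have hz : Continuous fun w => h w z := hh.comp (by fun_prop : Continuous fun w => (w, z))
      refine (cauchy_schwarz hH hz).trans ?_
      gcongr
      have hq0 : 0 ≤ q z := integral_nonneg fun _ => norm_nonneg _
      apply Real.sqrt_le_iff.2 ⟨hq0, ?_⟩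
      obtain ⟨p, hp⟩ := hP.first (fun t => (z t : ℂ))
      have := one_var p.continuous (good_poly p)
      simp only [h, q, hp]
      exact this
    have step4 : ∫ w, H w ^ 2 ∂nu ≤ √(∫ w, H w ^ 2 ∂nu) * ∫ z, q z ∂(mu n) := by
      conv_lhs => rw [step2]
      rw [← integral_const_mul]
      refine integral_mono (integrable_of_cont ?_) (integrable_of_cont (by fun_prop)) step3
      refine continuous_integral_param ?_
      simp only [Function.uncurry_def]
      exact (hH.comp continuous_snd).mul (hh.comp continuous_swap)
    have step5 : ∫ z, q z ∂(mu n) = ∫ w : Circle, ∫ z, ‖P (Fin.cons (w : ℂ) (fun t => (z t : ℂ)))‖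
        ∂(mu n) ∂nu :=
      integral_integral_swap_of_hasCompactSupport hu (HasCompactSupport.of_compactSpace _)
    rw [← step5]
    refine step1.trans ?_
    set N := ∫ w, H w ^ 2 ∂nu
    have hN : 0 ≤ N := integral_nonneg fun _ => sq_nonneg _
    have hB : 0 ≤ ∫ z, q z ∂(mu n) :=
      integral_nonneg fun _ => integral_nonneg fun _ => norm_nonneg _
    have hs := Real.sq_sqrt hN
    have hs0 := Real.sqrt_nonneg N
    rcases hs0.eq_or_lt with h0 | h0
    · rw [← hs, ← h0, zero_pow two_ne_zero]; exact sq_nonneg _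
    · have : √N ≤ ∫ z, q z ∂(mu n) := by
        rw [← hs, sq, Real.sqrt_mul_self hs0] at step4
        exact le_of_mul_le_mul_left step4 h0
      rw [← hs]
      gcongr

/-- The homogeneous polynomial with (not necessarily symmetric) coefficients `c`. -/
def hom {m n : ℕ} (c : (Fin m → Fin n) → ℂ) (z : Fin n → ℂ) : ℂ := ∑ j, c j * ∏ t, z (j t)

lemma hom_sep {m n : ℕ} (c : (Fin m → Fin n) → ℂ) : SepPoly (hom c) := by
  refine ⟨by unfold hom; fun_prop, fun z v => ?_⟩
  refine ⟨∑ j, Polynomial.C (c j) *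
    ∏ t, if j t = v then Polynomial.X else Polynomial.C (z (j t)), fun w => ?_⟩
  simp only [hom, Polynomial.eval_finsetSum, Polynomial.eval_mul, Polynomial.eval_C,
    Polynomial.eval_prod]
  refine Finset.sum_congr rfl fun j _ => ?_
  congr 1
  refine Finset.prod_congr rfl fun t _ => ?_
  by_cases h : j t = v <;> simp [h]

lemma hom_smul {m n : ℕ} (c : (Fin m → Fin n) → ℂ) (s : ℂ) (z : Fin n → ℂ) :
    hom c (fun t => s * z t) = s ^ m * hom c z := by
  simp only [hom, Finset.mul_sum]
  refine Finset.sum_congr rfl fun j _ => ?_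
  rw [Finset.prod_mul_distrib]
  simp; ring

lemma perm_iff {m n : ℕ} (i j : Fin m → Fin n) :
    (∃ σ : Equiv.Perm (Fin m), j = i ∘ σ) ↔
      ∀ v, (Finset.univ.filter fun t => i t = v).card = (Finset.univ.filter fun t => j t = v).card := by
  constructor
  · rintro ⟨σ, rfl⟩ v
    symm
    refine Finset.card_bij (fun t _ => σ t) ?_ ?_ ?_
    · intro t ht; simpa using ht
    · intro a _ b _ h; exact σ.injective h
    · intro b hb; exact ⟨σ.symm b, by simpa using hb, by simp⟩
  · intro h
    have e : ∀ v, {t // j t = v} ≃ {t // i t = v} := fun v =>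
      Fintype.equivOfCardEq (by rw [Fintype.card_subtype, Fintype.card_subtype, h v])
    refine ⟨Equiv.ofFiberEquiv e, ?_⟩
    funext t
    exact (Equiv.ofFiberEquiv_map e t).symm

open Classical in
lemma orth {m n : ℕ} (i j : Fin m → Fin n) :
    ∫ z : Fin n → Circle, (∏ t, (z (i t) : ℂ)) * (starRingEnd ℂ) (∏ t, (z (j t) : ℂ)) ∂(mu n)
      = if ∃ σ : Equiv.Perm (Fin m), j = i ∘ σ then 1 else 0 := by
  have e : ∀ (i : Fin m → Fin n) (z : Fin n → Circle), ∏ t, (z (i t) : ℂ)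
      = ∏ v, (z v : ℂ) ^ (Finset.univ.filter fun t => i t = v).card := by
    intro i z
    rw [← Finset.prod_fiberwise Finset.univ i]
    refine Finset.prod_congr rfl fun v _ => ?_
    rw [← Finset.prod_const]
    refine Finset.prod_congr rfl fun t ht => ?_
    rw [(Finset.mem_filter.1 ht).2]
  simp_rw [e, map_prod, ← Finset.prod_mul_distrib]
  unfold mu
  rw [integral_fintype_prod_eq_prod (f := fun (v : Fin n) (w : Circle) =>
    (w : ℂ) ^ (Finset.univ.filter fun t => i t = v).card *
      (starRingEnd ℂ) ((w : ℂ) ^ (Finset.univ.filter fun t => j t = v).card))]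
  simp_rw [integral_orth, perm_iff]
  split_ifs with h
  · exact Finset.prod_eq_one fun v _ => by rw [if_pos (h v)]
  · push Not at h
    obtain ⟨v, hv⟩ := h
    exact Finset.prod_eq_zero (Finset.mem_univ v) (if_neg hv)

lemma hom_L2 {m n : ℕ} (c : (Fin m → Fin n) → ℂ)
    (hc : ∀ (j : Fin m → Fin n) (σ : Equiv.Perm (Fin m)), c (j ∘ σ) = c j) :
    ∫ z : Fin n → Circle, ‖hom c (fun t => (z t : ℂ))‖ ^ 2 ∂(mu n)
      = ∑ j, (classCard j : ℝ) * ‖c j‖ ^ 2 := by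
  classical
  have h : ((∫ z : Fin n → Circle, ‖hom c (fun t => (z t : ℂ))‖ ^ 2 ∂(mu n) : ℝ) : ℂ)
      = ((∑ j, (classCard j : ℝ) * ‖c j‖ ^ 2 : ℝ) : ℂ) := by
    rw [← integral_complex_ofReal]
    have e : ∀ z : Fin n → Circle, ((‖hom c (fun t => (z t : ℂ))‖ ^ 2 : ℝ) : ℂ)
        = ∑ i, ∑ j, (c i * (starRingEnd ℂ) (c j)) *
            ((∏ t, (z (i t) : ℂ)) * (starRingEnd ℂ) (∏ t, (z (j t) : ℂ))) := by
      intro z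
      push_cast
      rw [← Complex.mul_conj', hom, map_sum, Finset.sum_mul_sum]
      refine Finset.sum_congr rfl fun k _ => Finset.sum_congr rfl fun l _ => ?_
      rw [map_mul]; ring
    simp_rw [e]
    rw [integral_finsetSum _ fun k _ => integrable_of_cont (by fun_prop)]
    push_cast
    refine Finset.sum_congr rfl fun i hi => ?_
    rw [integral_finsetSum _ fun l _ => integrable_of_cont (by fun_prop)]
    have e2 : ∀ j, ∫ z : Fin n → Circle, (c i * (starRingEnd ℂ) (c j)) *
            ((∏ t, (z (i t) : ℂ)) * (starRingEnd ℂ) (∏ t, (z (j t) : ℂ))) ∂(mu n)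
            = if ∃ σ : Equiv.Perm (Fin m), j = i ∘ σ then ((‖c i‖ : ℂ) ^ 2) else 0 := by
      intro j
      rw [integral_const_mul, orth]
      split_ifs with h
      · obtain ⟨σ, rfl⟩ := h
        rw [hc, mul_one, Complex.mul_conj']
      · simp
    simp_rw [e2]
    rw [← Finset.sum_filter, Finset.sum_const, nsmul_eq_mul, classCard, Nat.card_eq_fintype_card,
      Fintype.card_subtype]
  exact_mod_cast h

lemma hom_L2_le_L1 {m n : ℕ} (c : (Fin m → Fin n) → ℂ)
    (hc : ∀ (j : Fin m → Fin n) (σ : Equiv.Perm (Fin m)), c (j ∘ σ) = c j) :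
    √(∑ j, (classCard j : ℝ) * ‖c j‖ ^ 2)
      ≤ √2 ^ m * ∫ z : Fin n → Circle, ‖hom c (fun t => (z t : ℂ))‖ ∂(mu n) := by
  have h := tensor n (hom c) (hom_sep c)
  have hB : 0 ≤ ∫ z : Fin n → Circle, ‖hom c (fun t => (z t : ℂ))‖ ∂(mu n) :=
    integral_nonneg fun _ => norm_nonneg _
  have e : ∀ z : Fin n → Circle, ‖hom c (fun t => (rr : ℂ) * (z t : ℂ))‖ ^ 2
      = (1 / 2) ^ m * ‖hom c (fun t => (z t : ℂ))‖ ^ 2 := by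
    intro z
    rw [hom_smul, norm_mul, mul_pow, norm_pow, Complex.norm_real, Real.norm_of_nonneg rr_nonneg,
      ← pow_mul, mul_comm m 2, pow_mul, rr_sq]
  simp_rw [e] at h
  rw [integral_const_mul, hom_L2 c hc] at h
  refine Real.sqrt_le_iff.2 ⟨by positivity, ?_⟩
  rw [mul_pow, ← pow_mul, mul_comm m 2, pow_mul, Real.sq_sqrt (by norm_num)]
  calc _ = 2 ^ m * ((1 / 2) ^ m * ∑ j, (classCard j : ℝ) * ‖c j‖ ^ 2) := by
        rw [← mul_assoc, ← mul_pow]; norm_num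
    _ ≤ _ := by gcongr

lemma classCard_insert {m n : ℕ} (k : Fin (m + 1)) (v : Fin n) (j : Fin m → Fin n) :
    classCard (k.insertNth v j : Fin (m + 1) → Fin n) ≤ (m + 1) * classCard j := by
  unfold classCard
  have : (m + 1) * Nat.card {j' : Fin m → Fin n // ∃ σ : Equiv.Perm (Fin m), j' = j ∘ σ}
      = Nat.card (Fin (m + 1) × {j' : Fin m → Fin n // ∃ σ : Equiv.Perm (Fin m), j' = j ∘ σ}) := by
    rw [Nat.card_prod]; simp
  rw [this]
  let Φ : {i : Fin (m + 1) → Fin n // ∃ σ : Equiv.Perm (Fin (m + 1)),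
      i = (k.insertNth v j : Fin (m + 1) → Fin n) ∘ σ} →
      Fin (m + 1) × {j' : Fin m → Fin n // ∃ σ : Equiv.Perm (Fin m), j' = j ∘ σ} := fun i =>
    (i.2.choose.symm k, ⟨fun s => i.1 ((i.2.choose.symm k).succAbove s), by
      have hσ := i.2.choose_spec
      set σ := i.2.choose
      have hne : ∀ s, ∃ y, k.succAbove y = σ ((σ.symm k).succAbove s) := by
        intro s
        apply Fin.exists_succAbove_eq
        intro h
        exact Fin.succAbove_ne (σ.symm k) s ((Equiv.eq_symm_apply σ).2 h)
      choose τ hτ using hne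
      have hinj : Function.Injective τ := by
        intro a b hab
        have := hτ a
        rw [hab, hτ b] at this
        exact (Fin.succAbove_right_injective (σ.injective this)).symm
      refine ⟨Equiv.ofBijective τ (Finite.injective_iff_bijective.1 hinj), ?_⟩
      funext s
      rw [hσ]
      simp only [Function.comp_apply, Equiv.ofBijective_apply]
      rw [← hτ s, Fin.insertNth_apply_succAbove]⟩)
  refine Nat.card_le_card_of_injective Φ ?_
  intro a b hab
  have h1 : a.2.choose.symm k = b.2.choose.symm k := congrArg Prod.fst hab
  have h2 : (fun s => a.1 ((a.2.choose.symm k).succAbove s))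
      = fun s => b.1 ((b.2.choose.symm k).succAbove s) := congrArg (fun x => x.2.1) hab
  have hv : ∀ i : {i : Fin (m + 1) → Fin n // ∃ σ : Equiv.Perm (Fin (m + 1)),
      i = (k.insertNth v j : Fin (m + 1) → Fin n) ∘ σ}, i.1 (i.2.choose.symm k) = v := by
    intro i
    have := congrFun i.2.choose_spec (i.2.choose.symm k)
    rw [this]; simp
  apply Subtype.ext
  funext t
  rcases Fin.eq_self_or_eq_succAbove (a.2.choose.symm k) t with h | ⟨s, h⟩
  · rw [h, hv a, h1, hv b]
  · rw [h]
    have := congrFun h2 s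
    rw [this, h1]

lemma sum_insert {m n : ℕ} (k : Fin (m + 1)) {M : Type*} [AddCommMonoid M]
    (f : (Fin (m + 1) → Fin n) → M) :
    ∑ i, f i = ∑ v : Fin n, ∑ j : Fin m → Fin n, f (k.insertNth v j) := by
  rw [← (Fin.insertNthEquiv (fun _ => Fin n) k).sum_comp, Fintype.sum_prod_type]
  rfl

lemma sum_filter_insert {m n : ℕ} (k : Fin (m + 1)) (v : Fin n)
    (f : (Fin (m + 1) → Fin n) → ℝ) :
    ∑ i ∈ Finset.univ.filter (fun i : Fin (m + 1) → Fin n => i k = v), f i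
      = ∑ j : Fin m → Fin n, f (k.insertNth v j) := by
  rw [Finset.sum_filter, sum_insert k, Finset.sum_comm]
  refine Finset.sum_congr rfl fun j _ => ?_
  simp

lemma sup_bound {m n : ℕ} (lam : (Fin (m + 1) → Fin n) → ℂ) (k : Fin (m + 1)) (S : ℝ)
    (hS : ∀ z : Fin (m + 1) → Fin n → ℂ, (∀ t j, ‖z t j‖ < 1) →
      ‖∑ i : Fin (m + 1) → Fin n, lam i * ∏ t, z t (i t)‖ ≤ S) (z : Fin n → Circle) :
    ∑ v, ‖hom (fun j => lam (k.insertNth v j)) (fun t => (z t : ℂ))‖ ≤ S := by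
  set p : Fin n → ℂ := fun v => hom (fun j => lam (k.insertNth v j)) (fun t => (z t : ℂ)) with hp
  let u : Fin n → ℂ := fun v => (starRingEnd ℂ) (p v) / ‖p v‖
  have hu1 : ∀ v, ‖u v‖ ≤ 1 := by
    intro v
    simp only [u, norm_div, RCLike.norm_conj, Complex.norm_real, norm_norm]
    exact div_self_le_one _
  have hu2 : ∀ v, u v * p v = ‖p v‖ := by
    intro v
    simp only [u]
    by_cases h : p v = 0
    · simp [h]
    · have : (‖p v‖ : ℂ) ≠ 0 := by simpa using h
      field_simp
      rw [mul_comm, Complex.mul_conj']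
  have key : ∀ s : ℝ, 0 ≤ s → s < 1 → s ^ (m + 1) * ∑ v, ‖p v‖ ≤ S := by
    intro s hs0 hs1
    let Z : Fin (m + 1) → Fin n → ℂ :=
      k.insertNth (fun v => (s : ℂ) * u v) (fun _ v => (s : ℂ) * z v)
    have hZ : ∀ t j, ‖Z t j‖ < 1 := by
      intro t j
      rcases Fin.eq_self_or_eq_succAbove k t with h | ⟨y, h⟩
      · simp only [Z, h, Fin.insertNth_apply_same, norm_mul, Complex.norm_real,
          Real.norm_of_nonneg hs0]
        nlinarith [hu1 j, norm_nonneg (u j)]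
      · simp only [Z, h, Fin.insertNth_apply_succAbove, norm_mul, Complex.norm_real,
          Real.norm_of_nonneg hs0, Circle.norm_coe, mul_one]
        exact hs1
    have h := hS Z hZ
    have e : ∑ i : Fin (m + 1) → Fin n, lam i * ∏ t, Z t (i t)
        = ((s ^ (m + 1) * ∑ v, ‖p v‖ : ℝ) : ℂ) := by
      rw [sum_insert k]
      push_cast
      rw [Finset.mul_sum]
      refine Finset.sum_congr rfl fun v _ => ?_
      rw [← hu2 v, hp]
      simp only [hom, Finset.mul_sum]
      refine Finset.sum_congr rfl fun j _ => ?_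
      rw [Fin.prod_univ_succAbove _ k]
      simp only [Z, Fin.insertNth_apply_same, Fin.insertNth_apply_succAbove,
        Finset.prod_mul_distrib, Finset.prod_const, Finset.card_univ, Fintype.card_fin]
      ring
    rw [e, Complex.norm_real, Real.norm_of_nonneg] at h
    · exact h
    · have : 0 ≤ ∑ v, ‖p v‖ := Finset.sum_nonneg fun _ _ => norm_nonneg _
      positivity
  have hc : Continuous fun s : ℝ => s ^ (m + 1) * ∑ v, ‖p v‖ := by fun_prop
  have lim := (hc.tendsto 1).mono_left (nhdsWithin_le_nhds (s := Set.Iio (1 : ℝ)))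
  simp only [one_pow, one_mul] at lim
  refine le_of_tendsto lim ?_
  have : Set.Ioo (0 : ℝ) 1 ∈ nhdsWithin (1 : ℝ) (Set.Iio 1) := Ioo_mem_nhdsLT (by norm_num)
  filter_upwards [this] with R hR
  exact key R hR.1.le hR.2

lemma insert_sym {m n : ℕ} (lam : (Fin (m + 1) → Fin n) → ℂ)
    (hsym : ∀ (i : Fin (m + 1) → Fin n) (σ : Equiv.Perm (Fin (m + 1))), lam (i ∘ σ) = lam i)
    (k : Fin (m + 1)) (v : Fin n) (j : Fin m → Fin n) (σ : Equiv.Perm (Fin m)) :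
    lam (k.insertNth v (j ∘ σ)) = lam (k.insertNth v j) := by
  let f : Fin (m + 1) → Fin (m + 1) := k.insertNth k fun s => k.succAbove (σ s)
  have hf : Function.Injective f := by
    intro a b hab
    rcases Fin.eq_self_or_eq_succAbove k a with h | ⟨y, h⟩ <;>
    rcases Fin.eq_self_or_eq_succAbove k b with h' | ⟨y', h'⟩ <;>
    subst_vars
    · rfl
    · simp only [f, Fin.insertNth_apply_same, Fin.insertNth_apply_succAbove] at hab
      exact absurd hab.symm (Fin.succAbove_ne _ _)
    · simp only [f, Fin.insertNth_apply_same, Fin.insertNth_apply_succAbove] at hab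
      exact absurd hab (Fin.succAbove_ne _ _)
    · simp only [f, Fin.insertNth_apply_succAbove] at hab
      rw [σ.injective (Fin.succAbove_right_injective hab)]
  rw [← hsym (k.insertNth v j) (Equiv.ofBijective f (Finite.injective_iff_bijective.1 hf))]
  congr 1
  funext t
  rcases Fin.eq_self_or_eq_succAbove k t with h | ⟨y, h⟩ <;> simp [f, h]

end

end MixedNorm

/-- For a symmetric family `(λ_i)_{i ∈ M(m+1,n)}` and every coordinate `k ∈ {0,…,m}`,
`∑_{i_k=1}^n (∑_{i^k} |i|·|λ_i|²)^{1/2}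
  ≤ √2^m · √(m+1) · sup_{z^{(0)},…,z^{(m)} ∈ 𝔻^n} |∑_i λ_i z^{(0)}_{i_0} ⋯ z^{(m)}_{i_m}|`. -/
theorem symmetric_mixed_norm_estimate (m n : ℕ) (hm : 0 < m) (hn : 0 < n)
    (lam : (Fin (m + 1) → Fin n) → ℂ)
    (hsym : ∀ (i : Fin (m + 1) → Fin n) (σ : Equiv.Perm (Fin (m + 1))),
      lam (i ∘ σ) = lam i)
    (k : Fin (m + 1)) :
    ∑ v : Fin n, Real.sqrt
        (∑ i ∈ Finset.univ.filter (fun i : Fin (m + 1) → Fin n => i k = v),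
          (classCard i : ℝ) * ‖lam i‖ ^ 2)
      ≤ Real.sqrt 2 ^ m * Real.sqrt ((m : ℝ) + 1) *
        sSup {x : ℝ | ∃ z : Fin (m + 1) → Fin n → ℂ,
          (∀ t j, ‖z t j‖ < 1) ∧
          x = ‖∑ i : Fin (m + 1) → Fin n, lam i * ∏ t, z t (i t)‖} := by
  set T := {x : ℝ | ∃ z : Fin (m + 1) → Fin n → ℂ,
          (∀ t j, ‖z t j‖ < 1) ∧
          x = ‖∑ i : Fin (m + 1) → Fin n, lam i * ∏ t, z t (i t)‖} with hT
  have hbdd : BddAbove T := by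
    refine ⟨∑ i, ‖lam i‖, ?_⟩
    rintro x ⟨z, hz, rfl⟩
    refine (norm_sum_le _ _).trans (Finset.sum_le_sum fun i _ => ?_)
    rw [norm_mul, norm_prod]
    exact mul_le_of_le_one_right (norm_nonneg _)
      (Finset.prod_le_one (fun _ _ => norm_nonneg _) fun t _ => (hz t (i t)).le)
  have hS : ∀ z : Fin n → Circle,
      ∑ v, ‖MixedNorm.hom (fun j => lam (k.insertNth v j)) (fun t => (z t : ℂ))‖ ≤ sSup T :=
    MixedNorm.sup_bound lam k (sSup T) fun z hz => le_csSup hbdd ⟨z, hz, rfl⟩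
  have hcont : ∀ v, Continuous fun z : Fin n → Circle =>
      ‖MixedNorm.hom (fun j => lam (k.insertNth v j)) (fun t => (z t : ℂ))‖ := by
    intro v
    have := (MixedNorm.hom_sep (fun j => lam (k.insertNth v j))).1
    fun_prop
  have hintegral : ∑ v, ∫ z : Fin n → Circle,
      ‖MixedNorm.hom (fun j => lam (k.insertNth v j)) (fun t => (z t : ℂ))‖ ∂(MixedNorm.mu n)
        ≤ sSup T := by
    rw [← MeasureTheory.integral_finsetSum _ fun v _ => MixedNorm.integrable_of_cont (hcont v)]
    refine (MeasureTheory.integral_mono (MixedNorm.integrable_of_cont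
      (continuous_finsetSum _ fun v _ => hcont v)) (MeasureTheory.integrable_const (sSup T))
      hS).trans ?_
    simp
  calc _ ≤ ∑ v : Fin n, √((m : ℝ) + 1) * (√2 ^ m * ∫ z : Fin n → Circle,
      ‖MixedNorm.hom (fun j => lam (k.insertNth v j)) (fun t => (z t : ℂ))‖ ∂(MixedNorm.mu n)) := by
        refine Finset.sum_le_sum fun v _ => ?_
        rw [MixedNorm.sum_filter_insert]
        have h1 := MixedNorm.hom_L2_le_L1 (fun j => lam (k.insertNth v j))
          (fun j σ => MixedNorm.insert_sym lam hsym k v j σ)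
        refine le_trans ?_ (mul_le_mul_of_nonneg_left h1 (Real.sqrt_nonneg _))
        rw [← Real.sqrt_mul (by positivity)]
        apply Real.sqrt_le_sqrt
        rw [Finset.mul_sum]
        refine Finset.sum_le_sum fun j _ => ?_
        rw [← mul_assoc]
        gcongr
        exact_mod_cast MixedNorm.classCard_insert k v j
    _ = √2 ^ m * √((m : ℝ) + 1) * ∑ v, ∫ z : Fin n → Circle,
      ‖MixedNorm.hom (fun j => lam (k.insertNth v j)) (fun t => (z t : ℂ))‖ ∂(MixedNorm.mu n) := by
        rw [Finset.mul_sum]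
        refine Finset.sum_congr rfl fun v _ => ?_
        ring
    _ ≤ _ := by gcongr
end

section
/- Let m, n be positive integers. Suppose r^{(1)}, …, r^{(N)} : M(m,n) → ℂ are symmetric families (i.e. r^{(t)}_i = r^{(t)}_j whenever i and j are permutations of each other) such that for every choice of scalars μ₁,…,μ_N with |μ_t| ≤ 1, sup_{z^{(1)},…,z^{(m)} ∈ 𝔻^n} | ∑_{t=1}^N μ_t ∑_{i ∈ M(m,n)} r^{(t)}_i z^{(1)}_{i_1} ⋯ z^{(m)}_{i_m} | ≤ 1. Then ∑_{t=1}^N ( ∑_{i ∈ M(m,n)} |i| · |r^{(t)}_i|² )^{1/2} ≤ (√2)^m. (The 1-summing norm of the weighted coefficient map I : ⊗^{m,s}_ε ℓ₁^n → ℓ₂(M(m,n)), ∑ r_i e_i ↦ (√|i| r_i)_i, is at most (√2)^m.) -/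
open Finset

open Complex MeasureTheory Metric

lemma coeff_uniq (F : ℂ → ℂ) (u v : ℕ → ℂ)
    (hu : ∀ᶠ z in nhds (0:ℂ), HasSum (fun n => z ^ n * u n) (F z))
    (hv : ∀ᶠ z in nhds (0:ℂ), HasSum (fun n => z ^ n * v n) (F z)) : u = v := by
  let P : (ℕ → ℂ) → FormalMultilinearSeries ℂ ℂ ℂ :=
    fun w n => ContinuousMultilinearMap.mkPiRing ℂ (Fin n) (w n)
  have key : ∀ w : ℕ → ℂ, (∀ᶠ z in nhds (0:ℂ), HasSum (fun n => z ^ n * w n) (F z)) →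
      HasFPowerSeriesAt F (P w) 0 := by
    intro w hw
    refine hasFPowerSeriesAt_iff.2 ?_
    filter_upwards [hw] with z hz
    simpa [P, FormalMultilinearSeries.coeff] using hz
  have := (key u hu).eq_formalMultilinearSeries (key v hv)
  funext n
  have h2 := congrFun this n
  have h3 := congrArg (fun q => q (fun _ => 1)) h2
  simpa [P] using h3

local notation "AC" => AddCircle (2 * Real.pi)

instance instFactPi : Fact (0 < 2 * Real.pi) := ⟨by positivity⟩

/-- the point of the unit circle with a given angle -/
noncomputable def ec (t : AC) : ℂ := fourier 1 t

lemma ec_norm (t : AC) : ‖ec t‖ = 1 := Circle.norm_coe _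

lemma ec_cont : Continuous ec := (fourier 1).continuous

lemma ec_mk (x : ℝ) : ec (x : AC) = Complex.exp (x * I) := by
  have hp : (Real.pi : ℂ) ≠ 0 := by exact_mod_cast Real.pi_ne_zero
  rw [ec, fourier_coe_apply]
  congr 1
  push_cast
  field_simp

/-- average over the unit circle -/
noncomputable def av {E : Type*} [NormedAddCommGroup E] [NormedSpace ℝ E] (F : ℂ → E) : E :=
  ∫ t : AC, F (ec t) ∂AddCircle.haarAddCircle

lemma bessel (H : ℂ → ℂ) (hH : ContinuousOn H (closedBall 0 1)) (K : ℕ) :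
    ∑ j ∈ range K, ‖(cauchyPowerSeries H 0 1).coeff j‖ ^ 2 ≤ av (fun z => ‖H z‖ ^ 2) := by
  have hc : Continuous (fun t : AC => H (ec t)) := by
    apply hH.comp_continuous
    · exact ec_cont
    · intro t; simp [ec_norm]
  let f : C(AC, ℂ) := ⟨_, hc⟩
  have h1 := hasSum_sq_fourierCoeff (ContinuousMap.toLp (E := ℂ) 2 AddCircle.haarAddCircle ℂ f)
  simp_rw [fourierCoeff_toLp] at h1
  have h2 : ∫ t : AC, ‖(ContinuousMap.toLp (E := ℂ) 2 AddCircle.haarAddCircle ℂ f) t‖ ^ 2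
      ∂AddCircle.haarAddCircle = av (fun z => ‖H z‖ ^ 2) := by
    apply integral_congr_ae
    filter_upwards [ContinuousMap.coeFn_toLp (p := 2) (𝕜 := ℂ) AddCircle.haarAddCircle f] with t ht
    rw [ht]; rfl
  rw [h2] at h1
  have h3 : ∀ j : ℕ, (cauchyPowerSeries H 0 1).coeff j = fourierCoeff f (j : ℤ) := by
    intro j
    rw [fourierCoeff_eq_intervalIntegral f _ 0]
    simp only [FormalMultilinearSeries.coeff, cauchyPowerSeries,
      ContinuousMultilinearMap.mkPiRing_apply, circleIntegral]
    simp only [f, ContinuousMap.coe_mk, ec_mk, fourier_coe_apply,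
      Pi.one_apply, prod_const_one, zero_add, deriv_circleMap, sub_zero, smul_eq_mul,
      circleMap, ofReal_one, one_mul]
    rw [mul_inv, mul_assoc, ← intervalIntegral.integral_const_mul]
    simp only [Complex.real_smul]
    push_cast
    rw [one_div]
    congr 1
    apply intervalIntegral.integral_congr
    intro x _
    have hp : (Real.pi : ℂ) ≠ 0 := by exact_mod_cast Real.pi_ne_zero
    have e1 : Complex.exp (2 * Real.pi * I * ((-(j:ℤ) : ℤ) : ℂ) * x / (2 * Real.pi : ℝ)) =
        (Complex.exp (x * I))⁻¹ ^ j := by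
      rw [← Complex.exp_neg, ← Complex.exp_nat_mul]
      congr 1
      push_cast
      field_simp
    simp only []
    push_cast at e1 ⊢
    rw [e1]
    have := Complex.exp_ne_zero (x * I)
    have := Complex.I_ne_zero
    field_simp
  simp_rw [h3]
  calc _ = ∑ j ∈ (range K).map Nat.castEmbedding, ‖fourierCoeff f (j : ℤ)‖ ^ 2 := by
        rw [sum_map]; rfl
    _ ≤ _ := sum_le_hasSum _ (fun _ _ => by positivity) h1

lemma convol (H : ℂ → ℂ) (hH : DiffContOnCl ℂ H (ball 0 1)) (g : Polynomial ℂ)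
    (hg : ∀ z ∈ closedBall (0:ℂ) 1, H z ^ 2 = g.eval z) (k : ℕ) :
    g.coeff k = ∑ p ∈ antidiagonal k, (cauchyPowerSeries H 0 1).coeff p.1 *
      (cauchyPowerSeries H 0 1).coeff p.2 := by
  set d := fun j => (cauchyPowerSeries H 0 1).coeff j with hd
  have hp := DiffContOnCl.hasFPowerSeriesOnBall (R := 1) (c := (0:ℂ)) (f := H) (by simpa using hH) (by simp)
  have hs : ∀ z ∈ ball (0:ℂ) 1, HasSum (fun n => z ^ n * d n) (H z) := by
    intro z hz
    have := hp.hasSum (y := z) (by rw [Metric.eball_coe]; simpa using hz)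
    simpa using this
  have := coeff_uniq (fun z => g.eval z) g.coeff (fun k => ∑ p ∈ antidiagonal k, d p.1 * d p.2) ?_ ?_
  · exact congrFun this k
  · filter_upwards with z
    rw [Polynomial.eval_eq_sum_range]
    simp_rw [mul_comm (z ^ _)]
    apply hasSum_sum_of_ne_finset_zero
    intro b hb
    rw [Polynomial.coeff_eq_zero_of_natDegree_lt (by simpa [Nat.lt_succ_iff] using hb), zero_mul]
  · filter_upwards [ball_mem_nhds (0:ℂ) one_pos] with z hz
    have h1 := hs z hz
    have h2 := h1.summable.norm
    have h3 := tsum_mul_tsum_eq_tsum_sum_antidiagonal_of_summable_norm h2 h2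
    have h4 := (summable_norm_sum_mul_antidiagonal_of_summable_norm h2 h2).of_norm
    rw [h1.tsum_eq] at h3
    rw [← hg z (ball_subset_closedBall hz), sq, h3]
    have h5 := h4.hasSum
    refine (congrArg (fun F => HasSum F _) (funext fun n => ?_)).mpr h5
    show z ^ n * _ = _
    rw [mul_sum]
    apply sum_congr rfl
    intro p hp
    rw [HasAntidiagonal.mem_antidiagonal] at hp
    rw [← hp, pow_add]; ring

/-- zero-free polynomials with a square root on the disc -/
def Good (g : Polynomial ℂ) : Prop :=
  ∃ H : ℂ → ℂ, DiffContOnCl ℂ H (ball 0 1) ∧ ∀ z ∈ closedBall (0:ℂ) 1, H z ^ 2 = g.eval z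

lemma good_C (c : ℂ) : Good (Polynomial.C c) := by
  obtain ⟨s, hs⟩ := IsAlgClosed.exists_pow_nat_eq c (n := 2) (by norm_num)
  exact ⟨fun _ => s, diffContOnCl_const, fun z _ => by simp [hs]⟩

lemma Good.mul {f g : Polynomial ℂ} (hf : Good f) (hg : Good g) : Good (f * g) := by
  obtain ⟨H, h1, h2⟩ := hf
  obtain ⟨G, h3, h4⟩ := hg
  refine ⟨fun z => H z * G z, h1.smul h3, fun z hz => ?_⟩
  rw [mul_pow, h2 z hz, h4 z hz, Polynomial.eval_mul]

lemma good_lin (b : ℂ) (hb : ‖b‖ ≤ 1) : Good (1 - Polynomial.C b * Polynomial.X) := by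
  refine ⟨fun z => (1 - b * z) ^ (1/2 : ℂ), ?_, fun z hz => ?_⟩
  · have hre : ∀ z : ℂ, 1 - ‖z‖ ≤ (1 - b * z).re := by
      intro z
      have : (b * z).re ≤ ‖b * z‖ := Complex.re_le_norm _
      rw [norm_mul] at this
      have := mul_le_of_le_one_left (norm_nonneg z) hb
      simp only [sub_re, one_re]
      linarith
    apply DiffContOnCl.mk_ball
    · intro z hz
      apply DifferentiableAt.differentiableWithinAt
      apply DifferentiableAt.cpow_const
      · fun_prop
      · left
        have := hre z
        rw [mem_ball_zero_iff] at hz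
        linarith
    · intro z hz
      apply ContinuousAt.continuousWithinAt
      have := hre z
      rw [mem_closedBall_zero_iff] at hz
      apply ContinuousAt.comp (g := fun w : ℂ => w ^ (1/2:ℂ)) (f := fun z => 1 - b * z)
      · exact continuousAt_cpow_const_of_re_pos (Or.inl (by linarith)) (by norm_num)
      · fun_prop
  · simp [← Complex.cpow_nat_mul]

lemma good_carleman (g : Polynomial ℂ) (hg : Good g) (K : ℕ) :
    ∑ k ∈ range K, (1 / ((k:ℝ) + 1)) * ‖g.coeff k‖ ^ 2 ≤ (av (fun z => ‖g.eval z‖)) ^ 2 := by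
  obtain ⟨H, h1, h2⟩ := hg
  set u : ℕ → ℝ := fun j => ‖(cauchyPowerSeries H 0 1).coeff j‖ ^ 2 with hu
  have hb := bessel H h1.continuousOn_ball K
  have hav : av (fun z => ‖H z‖ ^ 2) = av (fun z => ‖g.eval z‖) := by
    unfold av
    congr 1
    funext t
    show ‖H (ec t)‖ ^ 2 = ‖g.eval (ec t)‖
    rw [← h2 _ (by simp [ec_norm]), norm_pow]
  rw [hav] at hb
  have hk : ∀ k : ℕ, (1 / ((k:ℝ) + 1)) * ‖g.coeff k‖ ^ 2 ≤ ∑ p ∈ antidiagonal k, u p.1 * u p.2 := by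
    intro k
    rw [convol H h1 g h2 k]
    rw [one_div, inv_mul_le_iff₀ (by positivity)]
    calc _ ≤ (∑ p ∈ antidiagonal k, ‖(cauchyPowerSeries H 0 1).coeff p.1 *
          (cauchyPowerSeries H 0 1).coeff p.2‖) ^ 2 := by
          gcongr; exact norm_sum_le _ _
      _ ≤ _ := sq_sum_le_card_mul_sum_sq
      _ = _ := by
        simp [hu, mul_pow, Finset.Nat.card_antidiagonal]
  calc _ ≤ ∑ k ∈ range K, ∑ p ∈ antidiagonal k, u p.1 * u p.2 := sum_le_sum fun k _ => hk k
    _ = ∑ x ∈ (range K).sigma (fun k => antidiagonal k), u x.2.1 * u x.2.2 := by rw [sum_sigma]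
    _ = ∑ p ∈ ((range K).sigma (fun k => antidiagonal k)).image (fun x => x.2), u p.1 * u p.2 := by
        rw [sum_image]
        rintro ⟨a, p⟩ ha ⟨b, q⟩ hb h
        simp only [coe_sigma, Set.mem_sigma_iff, mem_coe, HasAntidiagonal.mem_antidiagonal] at ha hb h
        subst h
        have : a = b := by rw [← ha.2, ← hb.2]
        subst this; rfl
    _ ≤ ∑ p ∈ range K ×ˢ range K, u p.1 * u p.2 := by
        apply sum_le_sum_of_subset_of_nonneg
        · intro p hp
          simp only [mem_image, mem_sigma, mem_range, HasAntidiagonal.mem_antidiagonal, mem_product] at hp ⊢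
          obtain ⟨x, hx, rfl⟩ := hp
          omega
        · intros; positivity
    _ = (∑ j ∈ range K, u j) ^ 2 := by rw [sq, sum_mul_sum, sum_product]
    _ ≤ _ := by
        gcongr

lemma swap_ineq (q : Polynomial ℂ) (a : ℂ) (ha : ‖a‖ ≤ 1) (K : ℕ) :
    ∑ k ∈ range K, (1 / ((k:ℝ) + 1)) * ‖((Polynomial.X - Polynomial.C a) * q).coeff k‖ ^ 2 ≤
    ∑ k ∈ range K, (1 / ((k:ℝ) + 1)) *
      ‖((1 - Polynomial.C (starRingEnd ℂ a) * Polynomial.X) * q).coeff k‖ ^ 2 := by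
  have hid : ∀ x y : ℂ, ‖x - a * y‖ ^ 2 = ‖y - starRingEnd ℂ a * x‖ ^ 2 + (1 - ‖a‖ ^ 2) * (‖x‖ ^ 2 - ‖y‖ ^ 2) := by
    intro x y
    simp only [← Complex.normSq_eq_norm_sq, Complex.normSq_apply]
    simp
    ring
  have ha2 : 0 ≤ 1 - ‖a‖ ^ 2 := by nlinarith [norm_nonneg a]
  cases K with
  | zero => simp
  | succ K =>
  suffices h : ∑ k ∈ range (K+1), (1 / ((k:ℝ) + 1)) * ‖((Polynomial.X - Polynomial.C a) * q).coeff k‖ ^ 2 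
      + (1 / ((K:ℝ) + 1)) * ((1 - ‖a‖ ^ 2) * ‖q.coeff K‖ ^ 2) ≤
    ∑ k ∈ range (K+1), (1 / ((k:ℝ) + 1)) *
      ‖((1 - Polynomial.C (starRingEnd ℂ a) * Polynomial.X) * q).coeff k‖ ^ 2 by
    have : 0 ≤ (1 / ((K:ℝ) + 1)) * ((1 - ‖a‖ ^ 2) * ‖q.coeff K‖ ^ 2) := by positivity
    linarith
  induction K with
  | zero =>
    have := hid 0 (q.coeff 0)
    simp [sub_mul, mul_assoc, Polynomial.mul_coeff_zero] at this ⊢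
    linarith
  | succ K ih =>
    rw [sum_range_succ, sum_range_succ _ (K+1)]
    have h1 : ((Polynomial.X - Polynomial.C a) * q).coeff (K+1) = q.coeff K - a * q.coeff (K+1) := by
      simp [sub_mul]
    have h2 : ((1 - Polynomial.C (starRingEnd ℂ a) * Polynomial.X) * q).coeff (K+1) =
        q.coeff (K+1) - starRingEnd ℂ a * q.coeff K := by
      simp [sub_mul, mul_assoc]
    rw [h1, h2, hid]
    have h3 : (1 / (((K+1:ℕ):ℝ) + 1)) * ((1 - ‖a‖ ^ 2) * ‖q.coeff K‖ ^ 2) ≤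
        (1 / ((K:ℝ) + 1)) * ((1 - ‖a‖ ^ 2) * ‖q.coeff K‖ ^ 2) := by
      gcongr
      simp
    nlinarith

lemma exists_good (s : Multiset ℂ) : ∀ (g : Polynomial ℂ), Good g → ∃ g' : Polynomial ℂ, Good g' ∧
    (∀ z : ℂ, ‖z‖ = 1 → ‖g'.eval z‖ = ‖((s.map (fun a => Polynomial.X - Polynomial.C a)).prod * g).eval z‖) ∧
    ∀ K : ℕ, ∑ k ∈ range K, (1 / ((k:ℝ) + 1)) *
      ‖((s.map (fun a => Polynomial.X - Polynomial.C a)).prod * g).coeff k‖ ^ 2 ≤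
      ∑ k ∈ range K, (1 / ((k:ℝ) + 1)) * ‖g'.coeff k‖ ^ 2 := by
  induction s using Multiset.induction_on with
  | empty => intro g hg; exact ⟨g, hg, by simp, by simp⟩
  | cons a s ih =>
    intro g hg
    rw [Multiset.map_cons, Multiset.prod_cons]
    set Q := (s.map (fun a => Polynomial.X - Polynomial.C a)).prod with hQ
    by_cases ha : ‖a‖ ≤ 1
    · obtain ⟨g', h1, h2, h3⟩ := ih _ ((good_lin (starRingEnd ℂ a) (by simpa using ha)).mul hg)
      refine ⟨g', h1, fun z hz => ?_, fun K => ?_⟩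
      · rw [h2 z hz]
        simp only [Polynomial.eval_mul, norm_mul, Polynomial.eval_sub, Polynomial.eval_X,
          Polynomial.eval_C, Polynomial.eval_one]
        have : ‖1 - starRingEnd ℂ a * z‖ = ‖z - a‖ := by
          have hzz : z * starRingEnd ℂ z = 1 := by
            rw [Complex.mul_conj, Complex.normSq_eq_norm_sq, hz]; simp
          calc _ = ‖z * starRingEnd ℂ (z - a)‖ := by
                rw [map_sub, mul_sub, hzz, mul_comm z]
            _ = _ := by rw [norm_mul, hz, one_mul, RCLike.norm_conj]
        rw [this]; ring
      · refine le_trans ?_ (h3 K)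
        have := swap_ineq (Q * g) a ha K
        rw [mul_assoc]
        rwa [show Q * ((1 - Polynomial.C (starRingEnd ℂ a) * Polynomial.X) * g) =
          (1 - Polynomial.C (starRingEnd ℂ a) * Polynomial.X) * (Q * g) by ring]
    · have ha0 : a ≠ 0 := by rintro rfl; simp at ha
      have hgood : Good (Polynomial.X - Polynomial.C a) := by
        have := (good_C (-a)).mul (good_lin a⁻¹ (by
          rw [norm_inv]; exact inv_le_one_of_one_le₀ (by linarith)))
        convert this using 1
        rw [mul_sub, ← mul_assoc, ← Polynomial.C_mul]
        have : -a * a⁻¹ = -1 := by field_simp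
        rw [this]; simp; ring
      obtain ⟨g', h1, h2, h3⟩ := ih _ (hgood.mul hg)
      refine ⟨g', h1, fun z hz => ?_, fun K => ?_⟩
      · rw [h2 z hz]; congr 2; ring
      · refine le_trans (le_of_eq ?_) (h3 K)
        congr! 5; ring

lemma carleman (f : Polynomial ℂ) (K : ℕ) :
    ∑ k ∈ range K, (1 / ((k:ℝ) + 1)) * ‖f.coeff k‖ ^ 2 ≤ (av (fun z => ‖f.eval z‖)) ^ 2 := by
  obtain ⟨g, h1, h2, h3⟩ := exists_good f.roots (Polynomial.C f.leadingCoeff) (good_C _)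
  have hf : (f.roots.map (fun a => Polynomial.X - Polynomial.C a)).prod *
      Polynomial.C f.leadingCoeff = f := by
    rw [mul_comm]
    exact ((IsAlgClosed.splits f).eq_prod_roots).symm
  rw [hf] at h2 h3
  refine (h3 K).trans ((good_carleman g h1 K).trans (le_of_eq ?_))
  congr 1
  unfold av
  congr 1
  funext t
  exact h2 _ (ec_norm t)

lemma ec_int {E : Type*} [NormedAddCommGroup E] [NormedSpace ℝ E] (F : ℂ → E) (hF : Continuous F) :
    Integrable (fun t : AC => F (ec t)) AddCircle.haarAddCircle :=
  (hF.comp ec_cont).integrable_of_hasCompactSupport (HasCompactSupport.of_compactSpace _)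

lemma vec_carleman {β : Type} [Fintype β] (K : ℕ) (c : β → Fin K → ℂ) :
    Real.sqrt (∑ b, ∑ k : Fin K, (1 / ((k:ℝ) + 1)) * ‖c b k‖ ^ 2) ≤
      av (fun z => Real.sqrt (∑ b, ‖∑ k : Fin K, c b k * z ^ (k:ℕ)‖ ^ 2)) := by
  let F : β → ℂ → ℝ := fun b z => ‖∑ k : Fin K, c b k * z ^ (k:ℕ)‖
  have h1 : ∀ b, ∑ k : Fin K, (1 / ((k:ℝ) + 1)) * ‖c b k‖ ^ 2 ≤ (av (F b)) ^ 2 := by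
    intro b
    have := carleman (∑ k : Fin K, Polynomial.C (c b k) * Polynomial.X ^ (k:ℕ)) K
    rw [Finset.sum_range] at this
    have hco : ∀ k : Fin K, (∑ k : Fin K, Polynomial.C (c b k) * Polynomial.X ^ (k:ℕ)).coeff (k:ℕ) = c b k := by
      intro k
      simp [Polynomial.finsetSum_coeff, Polynomial.coeff_C_mul, Polynomial.coeff_X_pow, ← Fin.ext_iff]
    simp only [hco, Polynomial.eval_finsetSum, Polynomial.eval_mul, Polynomial.eval_C,
      Polynomial.eval_pow, Polynomial.eval_X] at this
    exact this
  let G : ℂ → EuclideanSpace ℝ β := fun z => WithLp.toLp 2 (fun b => F b z)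
  have hFc : ∀ b, Continuous (F b) := by intro b; fun_prop
  have hG : Continuous G := by
    apply (PiLp.continuous_toLp 2 _).comp
    exact continuous_pi hFc
  have h2 : ∀ b, (av G) b = av (F b) := by
    intro b
    have := (EuclideanSpace.proj (𝕜 := ℝ) b : EuclideanSpace ℝ β →L[ℝ] ℝ).integral_comp_comm (ec_int G hG)
    exact this.symm
  calc _ ≤ Real.sqrt (∑ b, (av (F b)) ^ 2) := Real.sqrt_le_sqrt (sum_le_sum fun b _ => h1 b)
    _ = ‖av G‖ := by
      rw [EuclideanSpace.norm_eq]
      simp [h2]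
    _ ≤ av (fun z => ‖G z‖) := norm_integral_le_integral_norm _
    _ = _ := by
      simp [G, F, EuclideanSpace.norm_eq]

lemma one_step {β : Type} [Fintype β] (N K : ℕ) (c : Fin N → β → Fin K → ℂ)
    (h : ∀ z : ℂ, ‖z‖ = 1 → ∑ t, Real.sqrt (∑ b, ‖∑ k : Fin K, c t b k * z ^ (k:ℕ)‖ ^ 2) ≤ 1) :
    ∑ t, Real.sqrt (∑ b, ∑ k : Fin K, (1 / ((k:ℝ) + 1)) * ‖c t b k‖ ^ 2) ≤ 1 := by
  let Φ : Fin N → ℂ → ℝ := fun t z => Real.sqrt (∑ b, ‖∑ k : Fin K, c t b k * z ^ (k:ℕ)‖ ^ 2)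
  have hi : ∀ t, Integrable (fun x : AC => Φ t (ec x)) AddCircle.haarAddCircle := by
    intro t
    apply ec_int
    fun_prop
  have h1 : ∀ x : AC, ∑ t, Φ t (ec x) ≤ 1 := fun x => h _ (ec_norm x)
  have h2 : ∀ t, Real.sqrt (∑ b, ∑ k : Fin K, (1 / ((k:ℝ) + 1)) * ‖c t b k‖ ^ 2) ≤
      ∫ x : AC, Φ t (ec x) ∂AddCircle.haarAddCircle := fun t => vec_carleman K (c t)
  clear_value Φ
  refine (sum_le_sum fun t _ => h2 t).trans ?_
  rw [← integral_finsetSum _ (fun t _ => hi t)]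
  calc _ ≤ ∫ t : AC, (1:ℝ) ∂AddCircle.haarAddCircle := by
        apply integral_mono
        · exact integrable_finsetSum _ (fun t _ => hi t)
        · exact integrable_const _
        · exact h1
    _ = 1 := by simp

lemma multi_step (N K n : ℕ) : ∀ (β : Type) [Fintype β] (c : Fin N → β → (Fin n → Fin K) → ℂ),
    (∀ z : Fin n → ℂ, (∀ j, ‖z j‖ = 1) →
      ∑ t, Real.sqrt (∑ b, ‖∑ α : Fin n → Fin K, c t b α * ∏ j, z j ^ (α j : ℕ)‖ ^ 2) ≤ 1) →
    ∑ t, Real.sqrt (∑ b, ∑ α : Fin n → Fin K, (∏ j, (1 / ((α j : ℕ) + 1 : ℝ))) * ‖c t b α‖ ^ 2) ≤ 1 := by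
  induction n with
  | zero =>
    intro β _ c h
    have := h (fun _ => 1) (by simp)
    simpa using this
  | succ n ih =>
    intro β _ c h
    let c' : Fin N → (β × Fin K) → (Fin n → Fin K) → ℂ := fun t p α =>
      (Real.sqrt (1 / ((p.2 : ℕ) + 1 : ℝ)) : ℂ) * c t p.1 (Fin.cons p.2 α)
    have hw : ∀ k : Fin K, Real.sqrt (1 / ((k : ℕ) + 1 : ℝ)) ^ 2 = 1 / ((k : ℕ) + 1 : ℝ) :=
      fun k => Real.sq_sqrt (by positivity)
    have := ih (β × Fin K) c' ?_
    · convert this using 4 with t _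
      rw [Fintype.sum_prod_type]
      apply sum_congr rfl
      intro b _
      rw [← (Fin.consEquiv (fun _ => Fin K)).sum_comp, Fintype.sum_prod_type]
      apply sum_congr rfl
      intro k _
      apply sum_congr rfl
      intro α _
      have hce : (Fin.consEquiv fun _ => Fin K) (k, α) = Fin.cons k α := rfl
      rw [hce]
      simp only [Fin.prod_univ_succ, Fin.cons_zero, Fin.cons_succ, c', norm_mul,
        mul_pow, Complex.norm_real, Real.norm_eq_abs, sq_abs, hw]
      ring
    · intro z hz
      have h1 := one_step N K (fun t b k => ∑ α : Fin n → Fin K, c t b (Fin.cons k α) * ∏ j, z j ^ (α j : ℕ)) ?_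
      · convert h1 using 4 with t _
        rw [Fintype.sum_prod_type]
        apply sum_congr rfl
        intro b _
        apply sum_congr rfl
        intro k _
        simp only [c', mul_assoc, ← mul_sum]
        rw [norm_mul, mul_pow, Complex.norm_real, Real.norm_eq_abs, sq_abs, hw]
      · intro z0 hz0
        have h2 := h (Fin.cons z0 z) (by
          intro j
          refine Fin.cases ?_ ?_ j
          · simpa using hz0
          · intro j; simpa using hz j)
        convert h2 using 7 with t _ b _
        rw [← (Fin.consEquiv (fun _ => Fin K)).sum_comp, Fintype.sum_prod_type]
        apply sum_congr rfl
        intro k _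
        rw [sum_mul]
        apply sum_congr rfl
        intro α _
        have hce : (Fin.consEquiv fun _ => Fin K) (k, α) = Fin.cons k α := rfl
        rw [hce]
        simp only [Fin.prod_univ_succ, Fin.cons_zero, Fin.cons_succ]
        ring

/-- exponent vector of a multi-index -/
def cnt {m n : ℕ} (i : Fin m → Fin n) : Fin n → Fin (m + 1) :=
  fun j => ⟨(univ.filter (fun k => i k = j)).card, by
    have := card_le_univ (univ.filter (fun k => i k = j))
    simp only [Fintype.card_fin] at this
    omega⟩

lemma cnt_eq_iff {m n : ℕ} (i i' : Fin m → Fin n) :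
    cnt i' = cnt i ↔ ∃ σ : Equiv.Perm (Fin m), i' = i ∘ σ := by
  constructor
  · intro h
    have e : ∀ c : Fin n, Nonempty ({a // i' a = c} ≃ {a // i a = c}) := by
      intro c
      have := congrArg Fin.val (congrFun h c)
      simp only [cnt] at this
      rw [← Fintype.card_subtype, ← Fintype.card_subtype] at this
      exact ⟨Fintype.equivOfCardEq this⟩
    refine ⟨Equiv.ofFiberEquiv (fun c => (e c).some), ?_⟩
    funext a
    exact (Equiv.ofFiberEquiv_map (fun c => (e c).some) a).symm
  · rintro ⟨σ, rfl⟩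
    funext j
    apply Fin.ext
    simp only [cnt]
    rw [← Fintype.card_subtype, ← Fintype.card_subtype]
    exact Fintype.card_congr (σ.subtypeEquiv (fun a => by simp))

lemma prod_cnt {m n : ℕ} {M : Type*} [CommMonoid M] (i : Fin m → Fin n) (z : Fin n → M) :
    ∏ k, z (i k) = ∏ j, z j ^ (cnt i j : ℕ) := by
  rw [← Finset.prod_fiberwise_of_maps_to (s := univ) (t := univ) (g := i) (fun _ _ => mem_univ _)]
  apply prod_congr rfl
  intro j _
  rw [prod_congr rfl (g := fun _ => z j) (by intro k hk; rw [(mem_filter.1 hk).2]), prod_const]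
  rfl

lemma classCard_eq {m n : ℕ} (i : Fin m → Fin n) :
    classCard i = (univ.filter (fun i' : Fin m → Fin n => cnt i' = cnt i)).card := by
  unfold classCard
  rw [← Fintype.card_subtype, ← Nat.card_eq_fintype_card]
  exact Nat.card_congr (Equiv.subtypeEquivRight fun j => (cnt_eq_iff i j).symm)

lemma fin_coeff {m n : ℕ} (r : (Fin m → Fin n) → ℂ)
    (hsym : ∀ (i : Fin m → Fin n) (σ : Equiv.Perm (Fin m)), r (i ∘ σ) = r i) :
    (1 / 2 : ℝ) ^ m * ∑ i : Fin m → Fin n, (classCard i : ℝ) * ‖r i‖ ^ 2 ≤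
    ∑ α : Fin n → Fin (m + 1), (∏ j, (1 / ((α j : ℕ) + 1 : ℝ))) *
      ‖∑ i ∈ univ.filter (fun i => cnt i = α), r i‖ ^ 2 := by
  rw [← Finset.sum_fiberwise_of_maps_to (s := univ) (t := univ) (g := cnt) (fun _ _ => mem_univ _),
    mul_sum]
  apply sum_le_sum
  intro α _
  by_cases hα : ∃ i : Fin m → Fin n, cnt i = α
  · obtain ⟨i, rfl⟩ := hα
    have hr : ∀ i' ∈ univ.filter (fun i' : Fin m → Fin n => cnt i' = cnt i), r i' = r i := by
      intro i' hi'
      obtain ⟨σ, rfl⟩ := (cnt_eq_iff i i').1 (mem_filter.1 hi').2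
      exact hsym i σ
    rw [sum_congr rfl hr, sum_congr rfl (g := fun _ => (classCard i : ℝ) * ‖r i‖ ^ 2)
      (by intro i' hi'; rw [hr i' hi', classCard_eq, (mem_filter.1 hi').2, ← classCard_eq])]
    rw [sum_const, sum_const, ← classCard_eq, nsmul_eq_mul, nsmul_eq_mul, norm_mul, mul_pow,
      Complex.norm_natCast]
    have hw : (1 / 2 : ℝ) ^ m ≤ ∏ j, (1 / ((cnt i j : ℕ) + 1 : ℝ)) := by
      have := prod_cnt i (fun _ => (1/2 : ℝ))
      simp only [prod_const, card_univ, Fintype.card_fin] at this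
      rw [this]
      apply prod_le_prod
      · intros; positivity
      · intro j _
        rw [one_div_pow]
        apply one_div_le_one_div_of_le (by positivity)
        exact_mod_cast Nat.lt_two_pow_self
    calc _ = (1 / 2 : ℝ) ^ m * ((classCard i : ℝ) ^ 2 * ‖r i‖ ^ 2) := by ring
      _ ≤ _ := by gcongr
  · have : univ.filter (fun i : Fin m → Fin n => cnt i = α) = ∅ := by
      rw [filter_eq_empty_iff]; intro i _ hi; exact hα ⟨i, hi⟩
    rw [this]; simp

theorem one_summing_weighted_coefficient_map (m n : ℕ) (hm : 0 < m) (hn : 0 < n)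
    (N : ℕ) (r : Fin N → (Fin m → Fin n) → ℂ)
    (hsym : ∀ (t : Fin N) (i : Fin m → Fin n) (σ : Equiv.Perm (Fin m)),
      r t (i ∘ σ) = r t i)
    (h : ∀ μ : Fin N → ℂ, (∀ t, ‖μ t‖ ≤ 1) →
      ∀ z : Fin m → Fin n → ℂ, (∀ k j, ‖z k j‖ < 1) →
        ‖∑ t, μ t * ∑ i : Fin m → Fin n, r t i * ∏ k, z k (i k)‖ ≤ 1) :
    ∑ t, Real.sqrt (∑ i : Fin m → Fin n, (classCard i : ℝ) * ‖r t i‖ ^ 2)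
      ≤ Real.sqrt 2 ^ m := by
  have hT : ∀ z : Fin n → ℂ, (∀ j, ‖z j‖ = 1) →
      ∑ t, ‖∑ i : Fin m → Fin n, r t i * ∏ k, z (i k)‖ ≤ 1 := by
    intro z hz
    set L : Fin N → ℂ := fun t => ∑ i : Fin m → Fin n, r t i * ∏ k, z (i k) with hL
    have h1 : ∀ ρ : ℝ, ρ ∈ Set.Ioo (0:ℝ) 1 → ρ ^ m * ∑ t, ‖L t‖ ≤ 1 := by
      intro ρ hρ
      have h2 := h (fun t => starRingEnd ℂ (L t) / ‖L t‖) (by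
        intro t
        rw [norm_div, RCLike.norm_conj, Complex.norm_real, norm_norm]
        exact div_self_le_one _) (fun _ j => ρ * z j) (by
        intro k j
        rw [norm_mul, hz, Complex.norm_real, Real.norm_eq_abs, abs_of_pos hρ.1]
        simpa using hρ.2)
      have h3 : ∀ t, starRingEnd ℂ (L t) / ‖L t‖ * ∑ i : Fin m → Fin n, r t i * ∏ k, (ρ * z (i k)) =
          ((ρ ^ m * ‖L t‖ : ℝ) : ℂ) := by
        intro t
        have : ∑ i : Fin m → Fin n, r t i * ∏ k, (ρ * z (i k)) = ρ ^ m * L t := by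
          rw [hL, mul_sum]
          apply sum_congr rfl
          intro i _
          rw [prod_mul_distrib, prod_const, card_univ, Fintype.card_fin]
          ring
        rw [this]
        by_cases h0 : L t = 0
        · simp [h0]
        · have h0' : (‖L t‖ : ℂ) ≠ 0 := by exact_mod_cast norm_ne_zero_iff.2 h0
          have h5 := Complex.conj_mul' (L t)
          push_cast
          rw [div_mul_eq_mul_div, div_eq_iff h0']
          linear_combination (ρ:ℂ) ^ m * h5
      simp only [h3] at h2
      rw [← Complex.ofReal_sum, Complex.norm_real, ← mul_sum] at h2
      exact (le_abs_self _).trans h2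
    have h4 : Filter.Tendsto (fun ρ : ℝ => ρ ^ m * ∑ t, ‖L t‖) (nhdsWithin 1 (Set.Iio 1))
        (nhds (1 ^ m * ∑ t, ‖L t‖)) := by
      apply Filter.Tendsto.mono_left _ nhdsWithin_le_nhds
      exact Continuous.tendsto (by fun_prop) 1
    have h5 := le_of_tendsto h4 (b := 1) (by
      filter_upwards [Ioo_mem_nhdsLT (show (0:ℝ) < 1 by norm_num)] with ρ hρ using h1 ρ hρ)
    simpa using h5
  have h6 := multi_step N (m + 1) n Unit
    (fun t _ α => ∑ i ∈ univ.filter (fun i => cnt i = α), r t i) (by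
      intro z hz
      refine le_trans (le_of_eq ?_) (hT z hz)
      apply sum_congr rfl
      intro t _
      rw [univ_unique, sum_singleton, Real.sqrt_sq (norm_nonneg _)]
      congr 1
      symm
      rw [← Finset.sum_fiberwise_of_maps_to (s := univ) (t := univ) (g := cnt)
        (fun _ _ => mem_univ _)]
      apply sum_congr rfl
      intro α _
      rw [sum_mul]
      apply sum_congr rfl
      intro i hi
      rw [prod_cnt, (mem_filter.1 hi).2])
  have h7 : ∀ t, Real.sqrt (∑ i : Fin m → Fin n, (classCard i : ℝ) * ‖r t i‖ ^ 2) ≤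
      Real.sqrt 2 ^ m * Real.sqrt (∑ α : Fin n → Fin (m + 1), (∏ j, (1 / ((α j : ℕ) + 1 : ℝ))) *
      ‖∑ i ∈ univ.filter (fun i => cnt i = α), r t i‖ ^ 2) := by
    intro t
    have h8 := fin_coeff (r t) (hsym t)
    have h9 : Real.sqrt 2 ^ m = Real.sqrt (2 ^ m) := by
      clear * -
      induction m with
      | zero => simp
      | succ m ih => rw [pow_succ, pow_succ, Real.sqrt_mul (by positivity), ih]
    rw [h9, ← Real.sqrt_mul (by positivity)]
    apply Real.sqrt_le_sqrt
    rw [one_div_pow, one_div, inv_mul_le_iff₀ (by positivity)] at h8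
    exact h8
  refine (sum_le_sum fun t _ => h7 t).trans ?_
  rw [← mul_sum]
  simp only [univ_unique, sum_singleton] at h6
  exact mul_le_of_le_one_right (by positivity) h6
end

section
/- Let X_n = (ℂ^n, ‖·‖) be an n-dimensional Banach space in which the standard unit vectors e_1,…,e_n form a 1-unconditional basis. Then for every positive integer m, the unconditional basis constant of the monomials in the space 𝒫(^m X_n) of m-homogeneous polynomials satisfies χ_mon(𝒫(^m X_n)) ≤ (m^m/m!)² · 2^m · gl(𝒫(^m X_n)). -/
open Finset MeasureTheory

/-- Coefficient space of `m`-homogeneous polynomials on `ℂ^n`: families of complex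
numbers indexed by the multi-indices `α` with `|α| = m`. -/
abbrev Coef (n m : ℕ) :=
  { α : Fin n → ℕ // α ∈ Finset.Nat.antidiagonalTuple n m } → ℂ

/-- Evaluation of the `m`-homogeneous polynomial `∑_{|α|=m} a_α z^α` at `z ∈ ℂ^n`. -/
noncomputable def evalC {n m : ℕ} (a : Coef n m) (z : Fin n → ℂ) : ℂ :=
  ∑ α : { α : Fin n → ℕ // α ∈ Finset.Nat.antidiagonalTuple n m },
    a α * ∏ i, z i ^ (α : Fin n → ℕ) i

/-- The norm of an `m`-homogeneous polynomial on `X = (ℂ^n, ν)`: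
`‖P‖ = sup_{ν(z) ≤ 1} |P(z)|`. -/
noncomputable def polyNorm (n m : ℕ) (ν : (Fin n → ℂ) → ℝ) (a : Coef n m) : ℝ :=
  sSup {x : ℝ | ∃ z : Fin n → ℂ, ν z ≤ 1 ∧ x = ‖evalC a z‖}

/-- The operator norm of a linear map `T : V → W` relative to given norms on `V`, `W`. -/
noncomputable def opNormWith {V W : Type*} [AddCommGroup V] [Module ℂ V]
    [AddCommGroup W] [Module ℂ W] (νV : V → ℝ) (νW : W → ℝ) (T : V →ₗ[ℂ] W) : ℝ :=
  sSup {x : ℝ | ∃ v, νV v ≤ 1 ∧ x = νW (T v)}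

/-- The 1-summing norm `π₁(T)` of a linear map `T : V → W` relative to given norms
on `V`, `W`. -/
noncomputable def pi1With {V W : Type*} [AddCommGroup V] [Module ℂ V]
    [AddCommGroup W] [Module ℂ W] (νV : V → ℝ) (νW : W → ℝ) (T : V →ₗ[ℂ] W) : ℝ :=
  sSup {s : ℝ | ∃ (N : ℕ) (v : Fin N → V),
    (∀ lam : Fin N → ℂ, (∀ i, ‖lam i‖ ≤ 1) → νV (∑ i, lam i • v i) ≤ 1) ∧
    s = ∑ i, νW (T (v i))}

/-- The Gordon–Lewis constant of `(V, νV)`: the smallest `c ≥ 0` such that every operator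
`T : V → ℓ₂^k` factors as `T = S ∘ R` through some `L₁(μ)` with `‖R‖·‖S‖ ≤ c·π₁(T)`. -/
noncomputable def glWith (V : Type*) [AddCommGroup V] [Module ℂ V] (νV : V → ℝ) : ℝ :=
  sInf {c : ℝ | 0 ≤ c ∧ ∀ (k : ℕ) (T : V →ₗ[ℂ] EuclideanSpace ℂ (Fin k)),
    ∃ (Ω : Type) (_ : MeasurableSpace Ω) (μ : Measure Ω)
      (R : V →ₗ[ℂ] Lp ℂ 1 μ) (S : Lp ℂ 1 μ →L[ℂ] EuclideanSpace ℂ (Fin k)),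
      (∀ v, S (R v) = T v) ∧
      opNormWith νV (fun f => ‖f‖) R * ‖S‖
        ≤ c * pi1With νV (fun w => ‖w‖) T}

abbrev MIdx (n m : ℕ) := { α : Fin n → ℕ // α ∈ Finset.Nat.antidiagonalTuple n m }

lemma midx_sum {n m : ℕ} (α : MIdx n m) : ∑ i, α.1 i = m :=
  Finset.Nat.mem_antidiagonalTuple.1 α.2

lemma midx_le {n m : ℕ} (α : MIdx n m) (i : Fin n) : α.1 i ≤ m := by
  exact (Finset.single_le_sum (f := α.1) (fun _ _ => Nat.zero_le _) (Finset.mem_univ i)).trans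
    (midx_sum α).le

/-- the primitive root of unity -/
noncomputable def zt (M : ℕ) : ℂ := Complex.exp (2 * Real.pi * Complex.I / M)

lemma zt_prim {M : ℕ} (hM : M ≠ 0) : IsPrimitiveRoot (zt M) M := Complex.isPrimitiveRoot_exp M hM

lemma zt_norm {M : ℕ} (hM : M ≠ 0) : ‖zt M‖ = 1 := (zt_prim hM).norm'_eq_one hM

/-- points of the discrete torus -/
noncomputable def th {n M : ℕ} (g : Fin n → Fin M) : Fin n → ℂ := fun i => zt M ^ (g i : ℕ)

lemma th_norm {n M : ℕ} (hM : M ≠ 0) (g : Fin n → Fin M) (i : Fin n) : ‖th g i‖ = 1 := by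
  simp [th, zt_norm hM]

lemma geom_orth {M : ℕ} (hM : M ≠ 0) (a b : ℕ) (ha : a < M) (hb : b < M) :
    ∑ j : Fin M, (zt M ^ (j : ℕ)) ^ a * (starRingEnd ℂ) ((zt M ^ (j : ℕ)) ^ b)
      = if a = b then (M : ℂ) else 0 := by
  have hz := zt_norm hM
  have hz0 : zt M ≠ 0 := by
    intro h; rw [h] at hz; simp at hz
  have hc : (starRingEnd ℂ) (zt M) = (zt M)⁻¹ := by
    rw [Complex.inv_def, Complex.normSq_eq_norm_sq, hz]; simp
  have h1 : ∀ j : Fin M, (zt M ^ (j : ℕ)) ^ a * (starRingEnd ℂ) ((zt M ^ (j : ℕ)) ^ b)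
      = (zt M ^ a * (zt M ^ b)⁻¹) ^ (j : ℕ) := by
    intro j
    rw [map_pow, map_pow, hc, mul_pow, ← pow_mul, ← pow_mul, ← pow_mul, inv_pow, inv_pow,
      ← pow_mul, mul_comm a, mul_comm b]
    
  simp_rw [h1]
  rw [Fin.sum_univ_eq_sum_range (fun j => (zt M ^ a * (zt M ^ b)⁻¹) ^ j)]
  split_ifs with h
  · subst h
    rw [mul_inv_cancel₀ (pow_ne_zero _ hz0)]; simp
  · have hu : zt M ^ a * (zt M ^ b)⁻¹ ≠ 1 := by
      intro hh
      apply h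
      apply (zt_prim hM).pow_inj ha hb
      field_simp at hh
      exact hh
    rw [geom_sum_eq hu, mul_pow, inv_pow, ← pow_mul, ← pow_mul, mul_comm a, mul_comm b,
      pow_mul, pow_mul, (zt_prim hM).pow_eq_one]
    simp

lemma torus_orth {n M : ℕ} (hM : M ≠ 0) (a b : Fin n → ℕ) (ha : ∀ i, a i < M) (hb : ∀ i, b i < M) :
    ∑ g : Fin n → Fin M, (∏ i, th g i ^ a i) * (starRingEnd ℂ) (∏ i, th g i ^ b i)
      = if a = b then (M : ℂ) ^ n else 0 := by
  have : ∀ g : Fin n → Fin M, (∏ i, th g i ^ a i) * (starRingEnd ℂ) (∏ i, th g i ^ b i)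
      = ∏ i, ((zt M ^ (g i : ℕ)) ^ a i * (starRingEnd ℂ) ((zt M ^ (g i : ℕ)) ^ b i)) := by
    intro g
    rw [map_prod, ← Finset.prod_mul_distrib]; rfl
  simp_rw [this]
  rw [← Fintype.prod_sum (fun i (j : Fin M) => (zt M ^ (j : ℕ)) ^ a i *
    (starRingEnd ℂ) ((zt M ^ (j : ℕ)) ^ b i))]
  simp_rw [geom_orth hM _ _ (ha _) (hb _)]
  split_ifs with h
  · subst h; simp
  · obtain ⟨i, hi⟩ := Function.ne_iff.1 h
    exact Finset.prod_eq_zero (Finset.mem_univ i) (if_neg hi)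

lemma parseval {n d M : ℕ} (hM : d < M) (c : Coef n d) :
    ∑ g : Fin n → Fin M, ‖evalC c (th g)‖ ^ 2 = (M : ℝ) ^ n * ∑ γ, ‖c γ‖ ^ 2 := by
  have hM0 : M ≠ 0 := by omega
  have h : ∑ g : Fin n → Fin M, evalC c (th g) * (starRingEnd ℂ) (evalC c (th g))
      = (M : ℂ) ^ n * ∑ γ, c γ * (starRingEnd ℂ) (c γ) := by
    calc _ = ∑ g : Fin n → Fin M, ∑ γ : MIdx n d, ∑ δ : MIdx n d,
          (c γ * (starRingEnd ℂ) (c δ)) * ((∏ i, th g i ^ γ.1 i) *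
            (starRingEnd ℂ) (∏ i, th g i ^ δ.1 i)) := by
          refine Finset.sum_congr rfl fun g _ => ?_
          unfold evalC
          rw [map_sum, Finset.sum_mul_sum]
          refine Finset.sum_congr rfl fun γ _ => Finset.sum_congr rfl fun δ _ => ?_
          rw [map_mul]; ring
      _ = ∑ γ : MIdx n d, ∑ δ : MIdx n d, (c γ * (starRingEnd ℂ) (c δ)) *
            (if γ = δ then (M : ℂ) ^ n else 0) := by
          rw [Finset.sum_comm]
          refine Finset.sum_congr rfl fun γ _ => ?_
          rw [Finset.sum_comm]
          refine Finset.sum_congr rfl fun δ _ => ?_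
          rw [← Finset.mul_sum, torus_orth hM0 _ _ (fun i => (midx_le γ i).trans_lt hM)
            (fun i => (midx_le δ i).trans_lt hM)]
          by_cases h : γ = δ
          · rw [if_pos h, if_pos (congrArg Subtype.val h)]
          · rw [if_neg h, if_neg (fun hh => h (Subtype.ext hh))]
      _ = _ := by
          rw [Finset.mul_sum]
          refine Finset.sum_congr rfl fun γ _ => ?_
          rw [Finset.sum_eq_single γ]
          · rw [if_pos rfl]; ring
          · intro δ _ hδ
            rw [if_neg (Ne.symm hδ), mul_zero]
          · intro h; exact absurd (Finset.mem_univ γ) h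
  simp_rw [Complex.mul_conj, Complex.normSq_eq_norm_sq] at h
  exact_mod_cast h

lemma count_le {n m : ℕ} (γ : MIdx n (2 * m)) :
    (Finset.univ.filter (fun p : MIdx n m × MIdx n m => p.1.1 + p.2.1 = γ.1)).card
      ≤ (2 * m).choose m := by
  classical
  have hc : Fintype.card (Σ i, Fin (γ.1 i)) = 2 * m := by
    simp [midx_sum γ]
  have hc2 : (Finset.powersetCard m (Finset.univ : Finset (Σ i, Fin (γ.1 i)))).card
      = (2 * m).choose m := by
    rw [Finset.card_powersetCard, Finset.card_univ, hc]
  refine le_trans ?_ hc2.le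
  have hcard : ∀ α : MIdx n m, (∀ i, α.1 i ≤ γ.1 i) → ∀ i,
      (Finset.univ.filter (fun j : Fin (γ.1 i) => (j : ℕ) < α.1 i)).card = α.1 i := by
    intro α h i
    rw [Fin.card_filter_val_lt]; exact min_eq_right (h i)
  have hle : ∀ p : MIdx n m × MIdx n m, p.1.1 + p.2.1 = γ.1 → ∀ i, p.1.1 i ≤ γ.1 i := by
    intro p hp i
    rw [← hp]; simp
  refine Finset.card_le_card_of_injOn
    (fun p => Finset.univ.sigma
      (fun i => Finset.univ.filter (fun j : Fin (γ.1 i) => (j : ℕ) < p.1.1 i))) ?_ ?_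
  · intro p hp
    simp only [Finset.coe_filter, Finset.mem_univ, true_and, Set.mem_ofPred_eq] at hp
    simp only [Finset.mem_coe, Finset.mem_powersetCard]
    refine ⟨Finset.subset_univ _, ?_⟩
    rw [Finset.card_sigma]
    simp_rw [hcard p.1 (hle p hp)]
    exact midx_sum p.1
  · intro p hp q hq hpq
    simp only [Finset.coe_filter, Finset.mem_univ, true_and, Set.mem_ofPred_eq] at hp hq
    have h1 : p.1.1 = q.1.1 := by
      funext i
      rw [← hcard p.1 (hle p hp) i, ← hcard q.1 (hle q hq) i]
      congr 1
      ext j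
      have := congrArg (fun s => (⟨i, j⟩ : Σ i, Fin (γ.1 i)) ∈ s) hpq
      simpa using this
    have h2 : p.2.1 = q.2.1 := by
      have : p.1.1 + p.2.1 = p.1.1 + q.2.1 := by rw [hp, h1, hq]
      exact add_left_cancel this
    exact Prod.ext (Subtype.ext h1) (Subtype.ext h2)

/-- coefficients of the square -/
noncomputable def sqC {n m : ℕ} (x : Coef n m) : Coef n (2 * m) := fun γ =>
  ∑ p ∈ Finset.univ.filter (fun p : MIdx n m × MIdx n m => p.1.1 + p.2.1 = γ.1), x p.1 * x p.2

/-- sum of two multi-indices -/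
def addIdx {n m : ℕ} (p : MIdx n m × MIdx n m) : MIdx n (2 * m) :=
  ⟨p.1.1 + p.2.1, by
    rw [Finset.Nat.mem_antidiagonalTuple]
    simp [Finset.sum_add_distrib, midx_sum]; ring⟩

lemma fiber_sum {n m : ℕ} {E : Type*} [AddCommMonoid E] (f : MIdx n m × MIdx n m → E) :
    ∑ γ : MIdx n (2 * m),
      ∑ p ∈ Finset.univ.filter (fun p : MIdx n m × MIdx n m => p.1.1 + p.2.1 = γ.1), f p
      = ∑ p, f p := by
  rw [← Finset.sum_fiberwise (s := Finset.univ) (g := addIdx)]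
  refine Finset.sum_congr rfl fun γ _ => Finset.sum_congr ?_ fun _ _ => rfl
  ext p
  simp [addIdx, Subtype.ext_iff]

lemma evalC_sqC {n m : ℕ} (x : Coef n m) (z : Fin n → ℂ) : evalC (sqC x) z = evalC x z ^ 2 := by
  have h : ∀ γ : MIdx n (2 * m), sqC x γ * ∏ i, z i ^ γ.1 i =
     ∑ p ∈ Finset.univ.filter (fun p : MIdx n m × MIdx n m => p.1.1 + p.2.1 = γ.1),
      (x p.1 * ∏ i, z i ^ p.1.1 i) * (x p.2 * ∏ i, z i ^ p.2.1 i) := by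
    intro γ
    unfold sqC
    rw [Finset.sum_mul]
    refine Finset.sum_congr rfl fun p hp => ?_
    rw [Finset.mem_filter] at hp
    rw [← hp.2]
    simp only [Pi.add_apply, pow_add, Finset.prod_mul_distrib]
    ring
  have h0 : evalC (sqC x) z = ∑ γ : MIdx n (2 * m), sqC x γ * ∏ i, z i ^ γ.1 i := rfl
  rw [h0]
  simp_rw [h]
  rw [fiber_sum (fun p : MIdx n m × MIdx n m =>
    (x p.1 * ∏ i, z i ^ p.1.1 i) * (x p.2 * ∏ i, z i ^ p.2.1 i)), sq]
  unfold evalC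
  rw [Finset.sum_mul_sum, Fintype.sum_prod_type]

lemma sqC_bound {n m : ℕ} (x : Coef n m) :
    ∑ γ, ‖sqC x γ‖ ^ 2 ≤ (2 * m).choose m * (∑ α, ‖x α‖ ^ 2) ^ 2 := by
  have h : ∀ γ : MIdx n (2 * m), ‖sqC x γ‖ ^ 2 ≤ ((2 * m).choose m : ℝ) *
     ∑ p ∈ Finset.univ.filter (fun p : MIdx n m × MIdx n m => p.1.1 + p.2.1 = γ.1),
      ‖x p.1‖ ^ 2 * ‖x p.2‖ ^ 2 := by
    intro γ
    calc ‖sqC x γ‖ ^ 2 ≤ (∑ p ∈ Finset.univ.filter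
          (fun p : MIdx n m × MIdx n m => p.1.1 + p.2.1 = γ.1), ‖x p.1 * x p.2‖) ^ 2 := by
          gcongr; exact norm_sum_le _ _
      _ ≤ _ := sq_sum_le_card_mul_sum_sq
      _ ≤ _ := by
        simp_rw [norm_mul, mul_pow]
        gcongr
        exact count_le γ
  refine (Finset.sum_le_sum fun γ _ => h γ).trans ?_
  rw [← Finset.mul_sum, fiber_sum (fun p : MIdx n m × MIdx n m => ‖x p.1‖ ^ 2 * ‖x p.2‖ ^ 2), sq,
    Finset.sum_mul_sum, Fintype.sum_prod_type]

/-- Khinchine constant -/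
noncomputable def KK (m : ℕ) : ℝ := Real.sqrt ((2 * m).choose m : ℝ)

/-- Khinchine type inequality for homogeneous polynomials -/
lemma khin {n m : ℕ} (x : Coef n m) :
    Real.sqrt (∑ α, ‖x α‖ ^ 2) ≤ KK m *
      (((2 * m + 1 : ℕ) : ℝ) ^ n)⁻¹ * ∑ g : Fin n → Fin (2 * m + 1), ‖evalC x (th g)‖ := by
  set L : ℝ := ((2 * m + 1 : ℕ) : ℝ) ^ n with hL
  have hL0 : 0 < L := by positivity
  set f : (Fin n → Fin (2 * m + 1)) → ℝ := fun g => ‖evalC x (th g)‖ with hf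
  have hf0 : ∀ g, 0 ≤ f g := fun g => norm_nonneg _
  set C : ℝ := ((2 * m).choose m : ℝ) with hC
  have hC0 : 0 ≤ C := by positivity
  set B := ∑ α, ‖x α‖ ^ 2 with hB
  have hB0 : 0 ≤ B := by positivity
  have h2 : ∑ g, f g ^ 2 = L * B := parseval (by omega) x
  have h4 : ∑ g, f g ^ 4 ≤ L * (C * B ^ 2) := by
    have := parseval (n := n) (M := 2 * m + 1) (by omega) (sqC x)
    simp_rw [evalC_sqC, norm_pow, ← pow_mul] at this
    calc _ = _ := this
      _ ≤ _ := by gcongr; exact sqC_bound x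
  set S1 := ∑ g, f g with hS1
  have hS10 : 0 ≤ S1 := Finset.sum_nonneg fun g _ => hf0 g
  have hS30 : 0 ≤ ∑ g, f g ^ 3 := Finset.sum_nonneg fun g _ => pow_nonneg (hf0 g) _
  have c1 : (∑ g, f g ^ 2) ^ 2 ≤ S1 * ∑ g, f g ^ 3 := by
    apply Finset.sum_sq_le_sum_mul_sum_of_sq_le_mul
    · intro i _; exact hf0 i
    · intro i _; exact pow_nonneg (hf0 i) _
    · intro i _; exact le_of_eq (by ring)
  have c2 : (∑ g, f g ^ 3) ^ 2 ≤ (∑ g, f g ^ 2) * ∑ g, f g ^ 4 := by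
    apply Finset.sum_sq_le_sum_mul_sum_of_sq_le_mul
    · intro i _; exact pow_nonneg (hf0 i) _
    · intro i _; exact pow_nonneg (hf0 i) _
    · intro i _; exact le_of_eq (by ring)
  rw [h2] at c1 c2
  have key : B ≤ C * (L⁻¹ * S1) ^ 2 := by
    rcases hB0.eq_or_lt with h | h
    · rw [← h]; positivity
    · have c3 : (∑ g, f g ^ 3) ^ 2 ≤ (L * B) * (L * (C * B ^ 2)) :=
        c2.trans (by gcongr)
      have c4 : (L * B) ^ 4 ≤ S1 ^ 2 * ((L * B) * (L * (C * B ^ 2))) := by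
        calc (L * B) ^ 4 = ((L * B) ^ 2) ^ 2 := by ring
          _ ≤ (S1 * ∑ g, f g ^ 3) ^ 2 := by gcongr
          _ = S1 ^ 2 * (∑ g, f g ^ 3) ^ 2 := by ring
          _ ≤ _ := by gcongr
      have c5 : (L ^ 2 * B ^ 3) * (L ^ 2 * B) ≤ (L ^ 2 * B ^ 3) * (C * S1 ^ 2) := by
        nlinarith [c4]
      have c6 := le_of_mul_le_mul_left c5 (by positivity)
      have : C * (L⁻¹ * S1) ^ 2 = C * S1 ^ 2 / L ^ 2 := by field_simp
      rw [this, le_div_iff₀ (by positivity)]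
      linarith
  calc Real.sqrt B ≤ Real.sqrt (C * (L⁻¹ * S1) ^ 2) := Real.sqrt_le_sqrt key
    _ = Real.sqrt C * (L⁻¹ * S1) := by
      rw [Real.sqrt_mul hC0, Real.sqrt_sq (by positivity)]
    _ = _ := by unfold KK; ring

lemma fact_aux (m j : ℕ) (hj : j ≤ m) :
    (m + j).factorial ≤ (2 * m ^ 2) ^ j * (m - j).factorial := by
  induction j with
  | zero => simp
  | succ j ih =>
    have ih := ih (by omega)
    obtain ⟨k, rfl⟩ : ∃ k, m = j + 1 + k := ⟨m - (j + 1), by omega⟩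
    have e1 : j + 1 + k - j = k + 1 := by omega
    have e2 : j + 1 + k - (j + 1) = k := by omega
    rw [e1, Nat.factorial_succ] at ih
    rw [e2, ← add_assoc, Nat.factorial_succ, pow_succ]
    calc (j + 1 + k + j + 1) * (j + 1 + k + j).factorial
        ≤ (j + 1 + k + j + 1) * ((2 * (j + 1 + k) ^ 2) ^ j * ((k + 1) * k.factorial)) := by gcongr
      _ = (2 * (j + 1 + k) ^ 2) ^ j * ((j + 1 + k + j + 1) * (k + 1)) * k.factorial := by ring
      _ ≤ (2 * (j + 1 + k) ^ 2) ^ j * (2 * (j + 1 + k) ^ 2) * k.factorial := by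
        have : (j + 1 + k + j + 1) * (k + 1) ≤ 2 * (j + 1 + k) ^ 2 := by nlinarith
        exact Nat.mul_le_mul_right _ (Nat.mul_le_mul_left _ this)

lemma KK_sq (m : ℕ) :
    KK m * KK m ≤ ((m : ℝ) ^ m / (Nat.factorial m : ℝ)) ^ 2 * 2 ^ m := by
  have h1 := fact_aux m m le_rfl
  have h2 := Nat.choose_mul_factorial_mul_factorial (n := 2 * m) (k := m) (by omega)
  have e : 2 * m - m = m := by omega
  rw [e] at h2
  rw [← two_mul, ← h2] at h1
  simp only [Nat.sub_self, Nat.factorial_zero, mul_one] at h1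
  unfold KK
  rw [Real.mul_self_sqrt (by positivity)]
  have h3 : ((2 * m).choose m : ℝ) * m.factorial * m.factorial ≤ (2 * (m : ℝ) ^ 2) ^ m := by
    exact_mod_cast h1
  have h4 : (0 : ℝ) < m.factorial := by positivity
  have : ((m : ℝ) ^ m / (Nat.factorial m : ℝ)) ^ 2 * 2 ^ m
      = (2 * (m : ℝ) ^ 2) ^ m / (m.factorial * m.factorial) := by
    rw [mul_pow, ← pow_mul, mul_comm 2 m, pow_mul]; field_simp
  rw [this, le_div_iff₀ (by positivity)]
  linarith
lemma evalC_twist {n m : ℕ} (a : Coef n m) (θ z : Fin n → ℂ) :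
    evalC (fun α => a α * ∏ i, θ i ^ α.1 i) z = evalC a (fun i => θ i * z i) := by
  unfold evalC
  refine Finset.sum_congr rfl fun α _ => ?_
  simp only [mul_pow, Finset.prod_mul_distrib]; ring

section NormFacts

variable {n m : ℕ} {ν : (Fin n → ℂ) → ℝ}

lemma nu_nonneg (hadd : ∀ z w, ν (z + w) ≤ ν z + ν w)
    (hsmul : ∀ (c : ℂ) (z), ν (c • z) = ‖c‖ * ν z) (z : Fin n → ℂ) : 0 ≤ ν z := by
  have h1 := hadd z ((-1 : ℂ) • z)
  have h0 : ν 0 = 0 := by simpa using hsmul 0 0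
  rw [hsmul] at h1
  have : z + (-1 : ℂ) • z = 0 := by simp
  rw [this, h0] at h1
  simp at h1
  linarith

lemma coord_bound (hadd : ∀ z w, ν (z + w) ≤ ν z + ν w)
    (hsmul : ∀ (c : ℂ) (z), ν (c • z) = ‖c‖ * ν z)
    (hdef : ∀ z, ν z = 0 → z = 0)
    (huncond : ∀ (ε z : Fin n → ℂ), (∀ i, ‖ε i‖ ≤ 1) → ν (fun i => ε i * z i) ≤ ν z) :
    ∃ C : ℝ, 0 ≤ C ∧ ∀ z, ν z ≤ 1 → ∀ i, ‖z i‖ ≤ C := by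
  have hpos : ∀ i : Fin n, 0 < ν (Pi.single i 1) := by
    intro i
    refine lt_of_le_of_ne (nu_nonneg hadd hsmul _) fun h => ?_
    have := congrFun (hdef _ h.symm) i
    simp at this
  refine ⟨∑ i, (ν (Pi.single i 1))⁻¹, Finset.sum_nonneg fun i _ => (inv_pos.2 (hpos i)).le, ?_⟩
  intro z hz i
  have h1 := huncond (Pi.single i 1) z (by
    intro j
    by_cases h : j = i
    · subst h; simp
    · simp [h])
  have h2 : (fun j => (Pi.single i 1 : Fin n → ℂ) j * z j) = z i • Pi.single i 1 := by
    funext j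
    by_cases h : j = i
    · subst h; simp
    · simp [h]
  rw [h2, hsmul] at h1
  have h3 : ‖z i‖ ≤ (ν (Pi.single i 1))⁻¹ := by
    rw [← one_div, le_div_iff₀ (hpos i)]; linarith
  exact h3.trans (Finset.single_le_sum (f := fun i => (ν (Pi.single i 1))⁻¹)
    (fun i _ => (inv_pos.2 (hpos i)).le) (Finset.mem_univ i))

lemma eval_bound (hb : ∃ C : ℝ, 0 ≤ C ∧ ∀ z, ν z ≤ 1 → ∀ i, ‖z i‖ ≤ C) :
    ∃ D : ℝ, 0 ≤ D ∧ ∀ (a : Coef n m) z, ν z ≤ 1 → ‖evalC a z‖ ≤ D * ∑ α, ‖a α‖ := by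
  obtain ⟨C, hC, h⟩ := hb
  refine ⟨C ^ m, by positivity, fun a z hz => ?_⟩
  unfold evalC
  refine (norm_sum_le _ _).trans ?_
  rw [Finset.mul_sum]
  refine Finset.sum_le_sum fun α _ => ?_
  rw [norm_mul, mul_comm]
  gcongr
  rw [norm_prod]
  calc ∏ i, ‖z i ^ α.1 i‖ ≤ ∏ i, C ^ α.1 i := by
        refine Finset.prod_le_prod (fun _ _ => norm_nonneg _) fun i _ => ?_
        rw [norm_pow]
        exact pow_le_pow_left₀ (norm_nonneg _) (h z hz i) _
    _ = C ^ m := by rw [Finset.prod_pow_eq_pow_sum, midx_sum]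

lemma le_polyNorm (hb : ∃ C : ℝ, 0 ≤ C ∧ ∀ z, ν z ≤ 1 → ∀ i, ‖z i‖ ≤ C)
    (a : Coef n m) (z : Fin n → ℂ) (hz : ν z ≤ 1) : ‖evalC a z‖ ≤ polyNorm n m ν a := by
  obtain ⟨D, hD, h⟩ := eval_bound (m := m) hb
  refine le_csSup ⟨D * ∑ α, ‖a α‖, ?_⟩ ⟨z, hz, rfl⟩
  rintro _ ⟨w, hw, rfl⟩
  exact h a w hw

lemma polyNorm_nonneg (a : Coef n m) : 0 ≤ polyNorm n m ν a := by
  apply Real.sSup_nonneg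
  rintro _ ⟨w, hw, rfl⟩
  exact norm_nonneg _

lemma polyNorm_le (a : Coef n m) (B : ℝ) (hB : 0 ≤ B) (h : ∀ z, ν z ≤ 1 → ‖evalC a z‖ ≤ B) :
    polyNorm n m ν a ≤ B := by
  apply Real.sSup_le _ hB
  rintro _ ⟨w, hw, rfl⟩
  exact h w hw

lemma polyNorm_smul_le (hb : ∃ C : ℝ, 0 ≤ C ∧ ∀ z, ν z ≤ 1 → ∀ i, ‖z i‖ ≤ C)
    (c : ℂ) (a : Coef n m) : polyNorm n m ν (c • a) ≤ ‖c‖ * polyNorm n m ν a := by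
  apply polyNorm_le _ _ (mul_nonneg (norm_nonneg _) (polyNorm_nonneg _))
  intro z hz
  have : evalC (c • a) z = c * evalC a z := by
    unfold evalC
    rw [Finset.mul_sum]
    refine Finset.sum_congr rfl fun α _ => ?_
    simp [mul_assoc]
  rw [this, norm_mul]
  gcongr
  exact le_polyNorm hb a z hz

lemma polyNorm_twist_le (hb : ∃ C : ℝ, 0 ≤ C ∧ ∀ z, ν z ≤ 1 → ∀ i, ‖z i‖ ≤ C)
    (huncond : ∀ (ε z : Fin n → ℂ), (∀ i, ‖ε i‖ ≤ 1) → ν (fun i => ε i * z i) ≤ ν z)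
    (θ : Fin n → ℂ) (hθ : ∀ i, ‖θ i‖ ≤ 1) (a : Coef n m) :
    polyNorm n m ν (fun α => a α * ∏ i, θ i ^ α.1 i) ≤ polyNorm n m ν a := by
  apply polyNorm_le _ _ (polyNorm_nonneg _)
  intro z hz
  rw [evalC_twist]
  exact le_polyNorm hb a _ ((huncond θ z hθ).trans hz)

lemma coef_bound (hadd : ∀ z w, ν (z + w) ≤ ν z + ν w)
    (hsmul : ∀ (c : ℂ) (z), ν (c • z) = ‖c‖ * ν z)
    (huncond : ∀ (ε z : Fin n → ℂ), (∀ i, ‖ε i‖ ≤ 1) → ν (fun i => ε i * z i) ≤ ν z)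
    (hb : ∃ C : ℝ, 0 ≤ C ∧ ∀ z, ν z ≤ 1 → ∀ i, ‖z i‖ ≤ C) :
    ∃ C : ℝ, 0 ≤ C ∧ ∀ (a : Coef n m) α, ‖a α‖ ≤ C * polyNorm n m ν a := by
  have h1 := nu_nonneg hadd hsmul 1
  set t : ℝ := (1 + ν 1)⁻¹ with ht
  have ht0 : 0 < t := by positivity
  have hz0 : ν ((t : ℂ) • (1 : Fin n → ℂ)) ≤ 1 := by
    rw [hsmul, Complex.norm_real, Real.norm_eq_abs, abs_of_pos ht0, ht, inv_mul_le_iff₀ (by positivity)]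
    linarith
  refine ⟨(t ^ m)⁻¹, by positivity, fun a α => ?_⟩
  set b : Coef n m := fun α => a α * ∏ i, ((t : ℂ) • (1 : Fin n → ℂ)) i ^ α.1 i with hbdef
  have hbn : ∀ α, ‖b α‖ = ‖a α‖ * t ^ m := by
    intro α
    simp only [hbdef, norm_mul, norm_prod, norm_pow, Pi.smul_apply, Pi.one_apply, smul_eq_mul,
      mul_one, Complex.norm_real, Real.norm_eq_abs, abs_of_pos ht0]
    rw [Finset.prod_pow_eq_pow_sum, midx_sum]
  have hp := parseval (M := m + 1) (by omega) b
  have hle : ∀ g : Fin n → Fin (m + 1), ‖evalC b (th g)‖ ^ 2 ≤ polyNorm n m ν a ^ 2 := by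
    intro g
    gcongr
    rw [hbdef, evalC_twist]
    apply le_polyNorm hb
    have := huncond (th g) ((t : ℂ) • (1 : Fin n → ℂ)) (fun i => (th_norm (by omega) g i).le)
    refine le_trans (le_of_eq ?_) (this.trans hz0)
    congr 1; funext i; ring
  have hs : ∑ g : Fin n → Fin (m + 1), ‖evalC b (th g)‖ ^ 2
      ≤ ((m + 1 : ℕ) : ℝ) ^ n * polyNorm n m ν a ^ 2 := by
    refine (Finset.sum_le_sum fun g _ => hle g).trans ?_
    simp
  rw [hp] at hs
  have hs2 := le_of_mul_le_mul_left hs (by positivity)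
  have hs3 : ‖b α‖ ^ 2 ≤ polyNorm n m ν a ^ 2 :=
    (Finset.single_le_sum (f := fun γ => ‖b γ‖ ^ 2) (fun _ _ => by positivity)
      (Finset.mem_univ α)).trans hs2
  have hs4 := (sq_le_sq₀ (norm_nonneg _) (polyNorm_nonneg _)).1 hs3
  rw [hbn] at hs4
  rw [inv_mul_eq_div, le_div_iff₀ (by positivity)]
  exact hs4

lemma coef_eq_sum (v : Coef n m) : v = ∑ α, v α • (Pi.single α 1 : Coef n m) := by
  classical
  funext β
  rw [Finset.sum_apply, Finset.sum_eq_single β]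
  · simp
  · intro γ _ h
    simp [Pi.single_eq_of_ne h.symm]
  · intro h; exact absurd (Finset.mem_univ _) h

lemma le_opNormWith
    (hb : ∃ C : ℝ, 0 ≤ C ∧ ∀ z, ν z ≤ 1 → ∀ i, ‖z i‖ ≤ C)
    (hcb : ∃ C : ℝ, 0 ≤ C ∧ ∀ (a : Coef n m) α, ‖a α‖ ≤ C * polyNorm n m ν a)
    {W : Type*} [NormedAddCommGroup W] [NormedSpace ℂ W] (R : Coef n m →ₗ[ℂ] W) (v : Coef n m) :
    ‖R v‖ ≤ opNormWith (polyNorm n m ν) (fun f => ‖f‖) R * polyNorm n m ν v := by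
  obtain ⟨C, hC, h⟩ := hcb
  have hRv : ∀ v, ‖R v‖ ≤ (∑ α, C * ‖R (Pi.single α 1)‖) * polyNorm n m ν v := by
    intro v
    conv_lhs => rw [coef_eq_sum v, map_sum]
    refine (norm_sum_le _ _).trans ?_
    rw [Finset.sum_mul]
    refine Finset.sum_le_sum fun α _ => ?_
    rw [map_smul, norm_smul]
    have := h v α
    calc _ ≤ (C * polyNorm n m ν v) * ‖R (Pi.single α 1)‖ := by gcongr
      _ = _ := by ring
  have hC' : 0 ≤ ∑ α, C * ‖R (Pi.single α 1)‖ := by positivity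
  have hbdd : BddAbove {x : ℝ | ∃ v, polyNorm n m ν v ≤ 1 ∧ x = ‖R v‖} := by
    refine ⟨∑ α, C * ‖R (Pi.single α 1)‖, ?_⟩
    rintro _ ⟨v, hv, rfl⟩
    exact (hRv v).trans (mul_le_of_le_one_right hC' hv)
  rcases (polyNorm_nonneg (ν := ν) v).eq_or_lt with h0 | h0
  · have := hRv v
    rw [← h0] at this ⊢
    simpa using this
  · have h1 : ‖R (((polyNorm n m ν v)⁻¹ : ℂ) • v)‖ ≤
        opNormWith (polyNorm n m ν) (fun f => ‖f‖) R := by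
      refine le_csSup hbdd ⟨_, ?_, rfl⟩
      refine (polyNorm_smul_le hb _ _).trans ?_
      rw [norm_inv, Complex.norm_real, Real.norm_eq_abs, abs_of_pos h0, inv_mul_cancel₀ h0.ne']
    rw [map_smul, norm_smul, norm_inv, Complex.norm_real, Real.norm_eq_abs, abs_of_pos h0,
      inv_mul_le_iff₀ h0] at h1
    linarith

end NormFacts

section Trace

variable {Ω : Type} [MeasurableSpace Ω] {μ : Measure Ω} {k : ℕ}

/-- the trace functional -/
noncomputable def trF (S : Lp ℂ 1 μ →L[ℂ] EuclideanSpace ℂ (Fin k)) :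
    Lp (EuclideanSpace ℂ (Fin k)) 1 μ →L[ℂ] ℂ :=
  ∑ j : Fin k, (EuclideanSpace.proj j : EuclideanSpace ℂ (Fin k) →L[ℂ] ℂ).comp
    (S.comp (ContinuousLinearMap.compLpL 1 μ
      (EuclideanSpace.proj j : EuclideanSpace ℂ (Fin k) →L[ℂ] ℂ)))

lemma trF_apply (S : Lp ℂ 1 μ →L[ℂ] EuclideanSpace ℂ (Fin k))
    (F : Lp (EuclideanSpace ℂ (Fin k)) 1 μ) :
    trF S F = ∑ j : Fin k, S (ContinuousLinearMap.compLpL 1 μ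
      (EuclideanSpace.proj j : EuclideanSpace ℂ (Fin k) →L[ℂ] ℂ) F) j := by
  simp [trF]

lemma trF_bound (S : Lp ℂ 1 μ →L[ℂ] EuclideanSpace ℂ (Fin k))
    (F : Lp (EuclideanSpace ℂ (Fin k)) 1 μ) : ‖trF S F‖ ≤ ‖S‖ * ‖F‖ := by
  refine Lp.induction ENNReal.one_ne_top (motive := fun F => ‖trF S F‖ ≤ ‖S‖ * ‖F‖) ?_ ?_ ?_ F
  · intro c s hs hμs
    rw [Lp.simpleFunc.coe_indicatorConst, trF_apply]
    have h : ∀ j, ContinuousLinearMap.compLpL 1 μ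
      (EuclideanSpace.proj j : EuclideanSpace ℂ (Fin k) →L[ℂ] ℂ)
        (indicatorConstLp 1 hs hμs.ne c) = c j • indicatorConstLp 1 hs hμs.ne (1 : ℂ) := by
      intro j
      apply Lp.ext
      filter_upwards [ContinuousLinearMap.coeFn_compLpL (p := 1) (μ := μ)
        (EuclideanSpace.proj j : EuclideanSpace ℂ (Fin k) →L[ℂ] ℂ) (indicatorConstLp 1 hs hμs.ne c),
        indicatorConstLp_coeFn (p := 1) (hs := hs) (hμs := hμs.ne) (c := c),
        indicatorConstLp_coeFn (p := 1) (hs := hs) (hμs := hμs.ne) (c := (1 : ℂ)),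
        Lp.coeFn_smul (c j) (indicatorConstLp 1 hs hμs.ne (1 : ℂ))] with w h1 h2 h3 h4
      rw [h1, h4, h2, Pi.smul_apply, h3]
      by_cases hw : w ∈ s <;> simp [hw]
    simp_rw [h, map_smul, PiLp.smul_apply, smul_eq_mul]
    set u := S (indicatorConstLp 1 hs hμs.ne (1 : ℂ)) with hu
    have hun : ‖u‖ ≤ ‖S‖ * μ.real s := by
      refine (S.le_opNorm _).trans ?_
      rw [norm_indicatorConstLp (by simp) (by simp)]
      simp
    have hcs : ‖∑ j, c j * u j‖ ≤ ‖c‖ * ‖u‖ := by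
      rw [EuclideanSpace.norm_eq, EuclideanSpace.norm_eq]
      refine (norm_sum_le _ _).trans ?_
      simp_rw [norm_mul]
      exact Real.sum_mul_le_sqrt_mul_sqrt _ _ _
    refine hcs.trans ?_
    rw [norm_indicatorConstLp (by simp) (by simp)]
    simp only [ENNReal.toReal_one, div_one, Real.rpow_one]
    calc ‖c‖ * ‖u‖ ≤ ‖c‖ * (‖S‖ * μ.real s) := by gcongr
      _ = _ := by ring
  · intro f g hf hg hd h1 h2
    have : ‖hf.toLp f + hg.toLp g‖ = ‖hf.toLp f‖ + ‖hg.toLp g‖ := by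
      rw [L1.norm_eq_integral_norm, L1.norm_eq_integral_norm, L1.norm_eq_integral_norm,
        ← integral_add (L1.integrable_coeFn _).norm (L1.integrable_coeFn _).norm]
      apply integral_congr_ae
      filter_upwards [hf.coeFn_toLp, hg.coeFn_toLp, Lp.coeFn_add (hf.toLp f) (hg.toLp g)] with w a b c
      rw [c, Pi.add_apply, a, b]
      by_cases hw : f w = 0
      · simp [hw]
      · have : g w = 0 := by
          by_contra hgw
          exact Set.disjoint_left.1 hd hw hgw
        simp [this]
    rw [this, map_add, mul_add]
    exact (norm_add_le _ _).trans (add_le_add h1 h2)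
  · exact isClosed_le (by fun_prop) (by fun_prop)

lemma trace_bound (S : Lp ℂ 1 μ →L[ℂ] EuclideanSpace ℂ (Fin k)) (f : Fin k → Lp ℂ 1 μ) :
    ‖∑ j, S (f j) j‖ ≤ ‖S‖ * ∫ w, Real.sqrt (∑ j, ‖f j w‖ ^ 2) ∂μ := by
  have hm : MemLp (fun w => (WithLp.toLp 2 (fun j => f j w) : EuclideanSpace ℂ (Fin k))) 1 μ :=
    MemLp.of_eval_piLp fun j => Lp.memLp (f j)
  have hb := trF_bound S (hm.toLp _)
  have hn : ‖hm.toLp _‖ = ∫ w, Real.sqrt (∑ j, ‖f j w‖ ^ 2) ∂μ := by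
    rw [L1.norm_eq_integral_norm]
    apply integral_congr_ae
    filter_upwards [hm.coeFn_toLp] with w hw
    rw [hw, EuclideanSpace.norm_eq]
  rw [hn, trF_apply] at hb
  have : ∀ j, ContinuousLinearMap.compLpL 1 μ
      (EuclideanSpace.proj j : EuclideanSpace ℂ (Fin k) →L[ℂ] ℂ) (hm.toLp _) = f j := by
    intro j
    apply Lp.ext
    filter_upwards [ContinuousLinearMap.coeFn_compLpL (p := 1) (μ := μ)
        (EuclideanSpace.proj j : EuclideanSpace ℂ (Fin k) →L[ℂ] ℂ) (hm.toLp _),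
        hm.coeFn_toLp] with w h1 h2
    rw [h1, h2]; simp
  simp_rw [this] at hb
  exact hb

end Trace

section Count

lemma norm_count {ι : Type} [Fintype ι] [MeasurableSpace ι] [MeasurableSingletonClass ι]
    (f : Lp ℂ 1 (Measure.count : Measure ι)) : ‖f‖ = ∑ i, ‖f i‖ := by
  rw [L1.norm_eq_integral_norm, integral_fintype (L1.integrable_coeFn f).norm]
  simp

/-- a linear map into the space of integrable functions -/
noncomputable def RC (ι : Type) [Fintype ι] [MeasurableSpace ι] [MeasurableSingletonClass ι] :
    (ι → ℂ) →ₗ[ℂ] Lp ℂ 1 (Measure.count : Measure ι) where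
  toFun v := MemLp.toLp v (MemLp.of_discrete)
  map_add' v w := by rw [← MemLp.toLp_add]
  map_smul' c v := by rw [← MemLp.toLp_const_smul]; rfl

lemma RC_apply {ι : Type} [Fintype ι] [MeasurableSpace ι] [MeasurableSingletonClass ι]
    (v : ι → ℂ) (i : ι) : RC ι v i = v i := by
  have := MemLp.coeFn_toLp (μ := Measure.count) (p := 1) (f := v) MemLp.of_discrete
  exact Measure.ae_count_iff.1 this i

/-- a linear map out of the space of integrable functions -/
noncomputable def SC {ι : Type} [Fintype ι] [MeasurableSpace ι] [MeasurableSingletonClass ι]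
    {W : Type*} [NormedAddCommGroup W] [NormedSpace ℂ W] (x : ι → W) :
    Lp ℂ 1 (Measure.count : Measure ι) →L[ℂ] W :=
  LinearMap.mkContinuous
    { toFun := fun f => ∑ i, f i • x i
      map_add' := by
        intro f g
        rw [← Finset.sum_add_distrib]
        refine Finset.sum_congr rfl fun i _ => ?_
        rw [Measure.ae_count_iff.1 (Lp.coeFn_add f g) i, Pi.add_apply, add_smul]
      map_smul' := by
        intro c f
        rw [Finset.smul_sum]
        refine Finset.sum_congr rfl fun i _ => ?_
        rw [Measure.ae_count_iff.1 (Lp.coeFn_smul c f) i, Pi.smul_apply, smul_assoc, RingHom.id_apply] }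
    (∑ i, ‖x i‖) (by
      intro f
      refine (norm_sum_le _ _).trans ?_
      rw [Finset.sum_mul]
      refine Finset.sum_le_sum fun i _ => ?_
      rw [norm_smul, mul_comm]
      gcongr
      rw [norm_count]
      exact Finset.single_le_sum (f := fun i => ‖f i‖) (fun _ _ => norm_nonneg _) (Finset.mem_univ i))

lemma SC_norm {ι : Type} [Fintype ι] [MeasurableSpace ι] [MeasurableSingletonClass ι]
    {W : Type*} [NormedAddCommGroup W] [NormedSpace ℂ W] (x : ι → W) : ‖SC x‖ ≤ ∑ i, ‖x i‖ :=
  LinearMap.mkContinuous_norm_le _ (by positivity) _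

lemma SC_apply {ι : Type} [Fintype ι] [MeasurableSpace ι] [MeasurableSingletonClass ι]
    {W : Type*} [NormedAddCommGroup W] [NormedSpace ℂ W] (x : ι → W)
    (f : Lp ℂ 1 (Measure.count : Measure ι)) : SC x f = ∑ i, f i • x i := rfl

end Count

section Main

variable {n m : ℕ} {ν : (Fin n → ℂ) → ℝ}

lemma gl_nonempty
    (hb : ∃ C : ℝ, 0 ≤ C ∧ ∀ z, ν z ≤ 1 → ∀ i, ‖z i‖ ≤ C)
    (hcb : ∃ C : ℝ, 0 ≤ C ∧ ∀ (a : Coef n m) α, ‖a α‖ ≤ C * polyNorm n m ν a) :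
    {c : ℝ | 0 ≤ c ∧ ∀ (k : ℕ) (T : Coef n m →ₗ[ℂ] EuclideanSpace ℂ (Fin k)),
    ∃ (Ω : Type) (_ : MeasurableSpace Ω) (μ : Measure Ω)
      (R : Coef n m →ₗ[ℂ] Lp ℂ 1 μ) (S : Lp ℂ 1 μ →L[ℂ] EuclideanSpace ℂ (Fin k)),
      (∀ v, S (R v) = T v) ∧
      opNormWith (polyNorm n m ν) (fun f => ‖f‖) R * ‖S‖
        ≤ c * pi1With (polyNorm n m ν) (fun w => ‖w‖) T}.Nonempty := by
  classical
  obtain ⟨C, hC, hcb⟩ := hcb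
  obtain ⟨D, hD, heb⟩ := eval_bound (m := m) hb
  set N : ℝ := (Fintype.card (MIdx n m) : ℝ) with hN
  refine ⟨(N * C) * (N * (D + 1)), by positivity, fun k T => ?_⟩
  -- the set defining the summing norm is bounded
  have hbdd : BddAbove {s : ℝ | ∃ (N : ℕ) (v : Fin N → Coef n m),
    (∀ lam : Fin N → ℂ, (∀ i, ‖lam i‖ ≤ 1) → polyNorm n m ν (∑ i, lam i • v i) ≤ 1) ∧
    s = ∑ i, ‖T (v i)‖} := by
    refine ⟨∑ α, C * ‖T (Pi.single α 1)‖, ?_⟩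
    rintro _ ⟨M, v, hv, rfl⟩
    have h1 : ∀ i, ‖T (v i)‖ ≤ ∑ α, ‖v i α‖ * ‖T (Pi.single α 1)‖ := by
      intro i
      conv_lhs => rw [coef_eq_sum (v i), map_sum]
      refine (norm_sum_le _ _).trans (Finset.sum_le_sum fun α _ => ?_)
      rw [map_smul, norm_smul]
    have h2 : ∀ α, ∑ i, ‖v i α‖ ≤ C := by
      intro α
      have hl : ∀ x : ℂ, ∃ l : ℂ, ‖l‖ ≤ 1 ∧ l * x = (‖x‖ : ℂ) := by
        intro x
        by_cases hx : x = 0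
        · exact ⟨0, by simp, by simp [hx]⟩
        · refine ⟨(‖x‖ : ℂ) / x, ?_, by field_simp⟩
          rw [norm_div, Complex.norm_real, norm_norm, div_self (norm_ne_zero_iff.2 hx)]
      choose l hl1 hl2 using hl
      have h3 := hv (fun i => l (v i α)) (fun i => hl1 _)
      have h4 := hcb (∑ i, l (v i α) • v i) α
      have h5 : (∑ i, l (v i α) • v i) α = ((∑ i, ‖v i α‖ : ℝ) : ℂ) := by
        rw [Finset.sum_apply]
        simp [hl2]
      rw [h5, Complex.norm_real, Real.norm_eq_abs] at h4
      exact (le_abs_self _).trans (h4.trans (mul_le_of_le_one_right hC h3))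
    calc ∑ i, ‖T (v i)‖ ≤ ∑ i, ∑ α, ‖v i α‖ * ‖T (Pi.single α 1)‖ :=
          Finset.sum_le_sum fun i _ => h1 i
      _ = ∑ α, (∑ i, ‖v i α‖) * ‖T (Pi.single α 1)‖ := by
          rw [Finset.sum_comm]; simp_rw [Finset.sum_mul]
      _ ≤ _ := by
          refine Finset.sum_le_sum fun α _ => ?_
          gcongr
          exact h2 α
  have hpi : ∀ α : MIdx n m, ‖T (Pi.single α 1)‖ ≤
      (D + 1) * pi1With (polyNorm n m ν) (fun w => ‖w‖) T := by
    intro α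
    have h1 : polyNorm n m ν (Pi.single α 1) ≤ D := by
      apply polyNorm_le _ _ hD
      intro z hz
      refine (heb _ z hz).trans (le_of_eq ?_)
      rw [Finset.sum_eq_single α]
      · simp
      · intro β _ h; simp [Pi.single_eq_of_ne h]
      · intro h; exact absurd (Finset.mem_univ _) h
    have hD1 : ‖((D + 1 : ℝ) : ℂ)⁻¹‖ = (D + 1)⁻¹ := by
      rw [norm_inv, Complex.norm_real, Real.norm_eq_abs, abs_of_pos (by positivity)]
    have h2 : ‖T (((D + 1 : ℝ) : ℂ)⁻¹ • Pi.single α 1)‖ ≤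
        pi1With (polyNorm n m ν) (fun w => ‖w‖) T := by
      refine le_csSup hbdd ⟨1, fun _ => ((D + 1 : ℝ) : ℂ)⁻¹ • Pi.single α 1, ?_, by simp⟩
      intro lam hlam
      rw [Fin.sum_univ_one, smul_smul]
      refine (polyNorm_smul_le hb _ _).trans ?_
      rw [norm_mul, hD1]
      calc ‖lam 0‖ * (D + 1)⁻¹ * polyNorm n m ν (Pi.single α 1) ≤ 1 * (D + 1)⁻¹ * (D + 1) := by
            have := hlam 0
            have h1' : polyNorm n m ν (Pi.single α 1) ≤ D + 1 := by linarith
            gcongr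
            exact polyNorm_nonneg _
        _ = 1 := by field_simp
    rw [map_smul, norm_smul, hD1, inv_mul_le_iff₀ (by positivity)] at h2
    exact h2
  refine ⟨MIdx n m, inferInstance, Measure.count, RC (MIdx n m),
    SC (fun α => T (Pi.single α 1)), ?_, ?_⟩
  · intro v
    rw [SC_apply]
    conv_rhs => rw [coef_eq_sum v, map_sum]
    refine Finset.sum_congr rfl fun α _ => ?_
    rw [RC_apply, map_smul]
  · have hR : opNormWith (polyNorm n m ν) (fun f => ‖f‖) (RC (MIdx n m)) ≤ N * C := by
      apply Real.sSup_le _ (by positivity)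
      rintro _ ⟨v, hv, rfl⟩
      simp only [norm_count, RC_apply]
      calc ∑ α, ‖v α‖ ≤ ∑ α : MIdx n m, C := Finset.sum_le_sum fun α _ =>
            (hcb v α).trans (mul_le_of_le_one_right hC hv)
        _ = N * C := by simp [hN]
    have hS : ‖SC (fun α => T (Pi.single α 1))‖ ≤
        N * ((D + 1) * pi1With (polyNorm n m ν) (fun w => ‖w‖) T) := by
      refine (SC_norm _).trans ((Finset.sum_le_sum fun α _ => hpi α).trans (le_of_eq ?_))
      simp [hN]
    calc _ ≤ (N * C) * (N * ((D + 1) * pi1With (polyNorm n m ν) (fun w => ‖w‖) T)) := by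
          gcongr
      _ = _ := by ring

/-- the diagonal operator -/
noncomputable def diagT (b : Coef n m) :
    Coef n m →ₗ[ℂ] EuclideanSpace ℂ (Fin (Fintype.card (MIdx n m))) where
  toFun x := WithLp.toLp 2 (fun j => x ((Fintype.equivFin (MIdx n m)).symm j) *
    b ((Fintype.equivFin (MIdx n m)).symm j))
  map_add' x y := by ext j; simp [add_mul]
  map_smul' c x := by ext j; simp [mul_assoc]

lemma diagT_norm (b x : Coef n m) : ‖diagT b x‖ = Real.sqrt (∑ α, ‖x α * b α‖ ^ 2) := by
  rw [EuclideanSpace.norm_eq]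
  congr 1
  exact Equiv.sum_comp (Fintype.equivFin (MIdx n m)).symm (fun α => ‖x α * b α‖ ^ 2)

lemma pi1_diagT (hb : ∃ C : ℝ, 0 ≤ C ∧ ∀ z, ν z ≤ 1 → ∀ i, ‖z i‖ ≤ C)
    (huncond : ∀ (ε z : Fin n → ℂ), (∀ i, ‖ε i‖ ≤ 1) → ν (fun i => ε i * z i) ≤ ν z)
    (z : Fin n → ℂ) (hz : ν z ≤ 1) :
    pi1With (polyNorm n m ν) (fun w => ‖w‖) (diagT (fun α : MIdx n m => ∏ i, z i ^ α.1 i))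
      ≤ KK m := by
  have hK : 0 ≤ KK m := Real.sqrt_nonneg _
  apply Real.sSup_le _ hK
  rintro _ ⟨N, v, hv, rfl⟩
  simp only [diagT_norm]
  have hpt : ∀ g : Fin n → Fin (2 * m + 1),
      ∑ i, ‖evalC (fun α => v i α * ∏ j, z j ^ α.1 j) (th g)‖ ≤ 1 := by
    intro g
    simp_rw [evalC_twist]
    set y : Fin n → ℂ := fun i => z i * th g i with hy
    have hνy : ν y ≤ 1 := by
      have := huncond (th g) z (fun i => (th_norm (by omega) g i).le)
      refine le_trans (le_of_eq ?_) (this.trans hz)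
      congr 1; funext i; exact mul_comm _ _
    have hl : ∀ x : ℂ, ∃ l : ℂ, ‖l‖ ≤ 1 ∧ l * x = (‖x‖ : ℂ) := by
      intro x
      by_cases hx : x = 0
      · exact ⟨0, by simp, by simp [hx]⟩
      · refine ⟨(‖x‖ : ℂ) / x, ?_, by field_simp⟩
        rw [norm_div, Complex.norm_real, norm_norm, div_self (norm_ne_zero_iff.2 hx)]
    choose l hl1 hl2 using hl
    have h3 := hv (fun i => l (evalC (v i) y)) (fun i => hl1 _)
    have h4 := (le_polyNorm hb _ y hνy).trans h3
    have h5 : evalC (∑ i, l (evalC (v i) y) • v i) y = ((∑ i, ‖evalC (v i) y‖ : ℝ) : ℂ) := by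
      push_cast
      simp_rw [← hl2]
      have : ∀ i, l (evalC (v i) y) * evalC (v i) y = ∑ α : MIdx n m,
          l (evalC (v i) y) * (v i α * ∏ j, y j ^ α.1 j) := by
        intro i
        rw [← Finset.mul_sum]; rfl
      simp_rw [this]
      rw [Finset.sum_comm]
      unfold evalC
      refine Finset.sum_congr rfl fun α _ => ?_
      rw [Finset.sum_apply, Finset.sum_mul]
      refine Finset.sum_congr rfl fun i _ => ?_
      simp [mul_assoc]
    rw [h5, Complex.norm_real, Real.norm_eq_abs] at h4
    exact (le_abs_self _).trans h4
  set L : ℝ := ((2 * m + 1 : ℕ) : ℝ) ^ n with hL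
  have hL0 : 0 < L := by positivity
  calc ∑ i, Real.sqrt (∑ α : MIdx n m, ‖v i α * ∏ j, z j ^ α.1 j‖ ^ 2)
      ≤ ∑ i, KK m * L⁻¹ * ∑ g : Fin n → Fin (2 * m + 1),
        ‖evalC (fun α => v i α * ∏ j, z j ^ α.1 j) (th g)‖ :=
        Finset.sum_le_sum fun i _ => khin _
    _ = KK m * L⁻¹ * ∑ g : Fin n → Fin (2 * m + 1),
        ∑ i, ‖evalC (fun α => v i α * ∏ j, z j ^ α.1 j) (th g)‖ := by
        rw [← Finset.mul_sum, Finset.sum_comm]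
    _ ≤ KK m * L⁻¹ * ∑ g : Fin n → Fin (2 * m + 1), 1 := by
        gcongr with g
        exact hpt g
    _ = KK m := by
        have : ∑ g : Fin n → Fin (2 * m + 1), (1 : ℝ) = L := by simp [hL]
        rw [this]; field_simp

lemma main_bound (hb : ∃ C : ℝ, 0 ≤ C ∧ ∀ z, ν z ≤ 1 → ∀ i, ‖z i‖ ≤ C)
    (hcb : ∃ C : ℝ, 0 ≤ C ∧ ∀ (a : Coef n m) α, ‖a α‖ ≤ C * polyNorm n m ν a)
    (huncond : ∀ (ε z : Fin n → ℂ), (∀ i, ‖ε i‖ ≤ 1) → ν (fun i => ε i * z i) ≤ ν z)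
    (a ε b : Coef n m) (hε : ∀ α, ‖ε α‖ ≤ 1)
    {Ω : Type} [MeasurableSpace Ω] (μ : Measure Ω) (R : Coef n m →ₗ[ℂ] Lp ℂ 1 μ)
    (S : Lp ℂ 1 μ →L[ℂ] EuclideanSpace ℂ (Fin (Fintype.card (MIdx n m))))
    (hSR : ∀ v, S (R v) = diagT b v) :
    ‖∑ α, ε α * a α * b α‖ ≤
      KK m * (opNormWith (polyNorm n m ν) (fun f => ‖f‖) R * ‖S‖) * polyNorm n m ν a := by
  classical
  have hK : 0 ≤ KK m := Real.sqrt_nonneg _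
  set e := Fintype.equivFin (MIdx n m) with he
  set r : MIdx n m → Lp ℂ 1 μ := fun α => R (Pi.single α 1) with hr
  have h1 := trace_bound S (fun j => (ε (e.symm j) * a (e.symm j)) • r (e.symm j))
  have h2 : ∑ j, S ((ε (e.symm j) * a (e.symm j)) • r (e.symm j)) j = ∑ α, ε α * a α * b α := by
    rw [← Equiv.sum_comp e.symm (fun α => ε α * a α * b α)]
    refine Finset.sum_congr rfl fun j _ => ?_
    rw [map_smul, hr, hSR]
    simp [diagT, ← he]
  rw [h2] at h1
  refine h1.trans ?_
  set L : ℝ := ((2 * m + 1 : ℕ) : ℝ) ^ n with hL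
  have hL0 : 0 < L := by positivity
  set ag : (Fin n → Fin (2 * m + 1)) → Coef n m := fun g α => a α * ∏ i, th g i ^ α.1 i with hag
  have hint : ∀ g, Integrable (fun w => ‖R (ag g) w‖) μ := fun g => (L1.integrable_coeFn _).norm
  have h3 : ∫ w, Real.sqrt (∑ j, ‖((ε (e.symm j) * a (e.symm j)) • r (e.symm j) : Lp ℂ 1 μ) w‖ ^ 2) ∂μ
      ≤ ∫ w, KK m * L⁻¹ * ∑ g, ‖R (ag g) w‖ ∂μ := by
    apply integral_mono_of_nonneg
    · exact Filter.Eventually.of_forall fun w => Real.sqrt_nonneg _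
    · exact (integrable_finsetSum _ fun g _ => hint g).const_mul _
    · have hA : ∀ᵐ w ∂μ, ∀ j, ((ε (e.symm j) * a (e.symm j)) • r (e.symm j) : Lp ℂ 1 μ) w
          = (ε (e.symm j) * a (e.symm j)) * r (e.symm j) w := by
        rw [ae_all_iff]
        intro j
        filter_upwards [Lp.coeFn_smul (ε (e.symm j) * a (e.symm j)) (r (e.symm j))] with w hw
        rw [hw]; rfl
      have hB : ∀ᵐ w ∂μ, ∀ g, R (ag g) w = evalC (fun α => a α * r α w) (th g) := by
        rw [ae_all_iff]
        intro g
        have hS : R (ag g) = ∑ α, ag g α • r α := by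
          conv_lhs => rw [coef_eq_sum (ag g), map_sum]
          simp_rw [map_smul, hr]
        have hC : ∀ᵐ w ∂μ, ∀ α, (ag g α • r α : Lp ℂ 1 μ) w = ag g α * r α w := by
          rw [ae_all_iff]
          intro α
          filter_upwards [Lp.coeFn_smul (ag g α) (r α)] with w hw
          rw [hw]; rfl
        filter_upwards [hC, Lp.coeFn_finsetSum Finset.univ (fun α => ag g α • r α)] with w h1 h2
        rw [hS, h2, Finset.sum_apply]
        unfold evalC
        refine Finset.sum_congr rfl fun α _ => ?_
        rw [h1, hag]; ring
      filter_upwards [hA, hB] with w hw1 hw2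
      simp_rw [hw1, hw2]
      refine le_trans (Real.sqrt_le_sqrt ?_) (khin (fun α => a α * r α w))
      rw [Equiv.sum_comp e.symm (fun α => ‖ε α * a α * r α w‖ ^ 2)]
      refine Finset.sum_le_sum fun α _ => ?_
      gcongr
      rw [mul_assoc, norm_mul (ε α)]
      exact mul_le_of_le_one_left (norm_nonneg _) (hε α)
  have h4 : ∫ w, KK m * L⁻¹ * ∑ g, ‖R (ag g) w‖ ∂μ = KK m * L⁻¹ * ∑ g, ‖R (ag g)‖ := by
    rw [integral_const_mul, integral_finsetSum _ (fun g _ => hint g)]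
    simp_rw [L1.norm_eq_integral_norm]
  set Q := opNormWith (polyNorm n m ν) (fun f => ‖f‖) R with hQ
  have hQ0 : 0 ≤ Q := by
    apply Real.sSup_nonneg
    rintro _ ⟨v, _, rfl⟩
    exact norm_nonneg _
  have h5 : ∀ g, ‖R (ag g)‖ ≤ Q * polyNorm n m ν a := by
    intro g
    refine (le_opNormWith hb hcb R (ag g)).trans ?_
    gcongr
    exact polyNorm_twist_le hb huncond (th g) (fun i => (th_norm (by omega) g i).le) a
  have h6 : KK m * L⁻¹ * ∑ g, ‖R (ag g)‖ ≤ KK m * (Q * polyNorm n m ν a) := by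
    calc _ ≤ KK m * L⁻¹ * ∑ g : Fin n → Fin (2 * m + 1), Q * polyNorm n m ν a := by
          gcongr with g
          exact h5 g
      _ = KK m * L⁻¹ * (L * (Q * polyNorm n m ν a)) := by simp [hL]
      _ = _ := by field_simp
  calc _ ≤ ‖S‖ * (KK m * (Q * polyNorm n m ν a)) := by
        gcongr
        exact h3.trans (h4.le.trans h6)
    _ = _ := by ring

end Main

/-- For `X_n = (ℂ^n, ν)` with 1-unconditional standard basis, the unconditional basis
constant of the monomials in `𝒫(^m X_n)` is at most `(m^m/m!)² · 2^m · gl(𝒫(^m X_n))`: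
for every polynomial `∑ a_α z^α`, all scalars `|ε_α| ≤ 1` and all `z` with `ν z ≤ 1`,
`|∑ ε_α a_α z^α| ≤ (m^m/m!)² · 2^m · gl(𝒫(^m X_n)) · ‖∑ a_α z^α‖_{𝒫(^m X_n)}`. -/
theorem chiMon_le_gl (n m : ℕ) (hn : 0 < n) (hm : 0 < m)
    (ν : (Fin n → ℂ) → ℝ)
    (hadd : ∀ z w, ν (z + w) ≤ ν z + ν w)
    (hsmul : ∀ (c : ℂ) (z), ν (c • z) = ‖c‖ * ν z)
    (hdef : ∀ z, ν z = 0 → z = 0)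
    (huncond : ∀ (ε z : Fin n → ℂ), (∀ i, ‖ε i‖ ≤ 1) → ν (fun i => ε i * z i) ≤ ν z) :
    ∀ (a ε : Coef n m), (∀ α, ‖ε α‖ ≤ 1) →
      ∀ z : Fin n → ℂ, ν z ≤ 1 →
        ‖evalC (fun α => ε α * a α) z‖
          ≤ ((m : ℝ) ^ m / (Nat.factorial m : ℝ)) ^ 2 * 2 ^ m *
              glWith (Coef n m) (polyNorm n m ν) * polyNorm n m ν a := by
  intro a ε hε z hz
  have hb := coord_bound hadd hsmul hdef huncond
  have hcb := coef_bound (m := m) hadd hsmul huncond hb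
  set A : ℝ := ((m : ℝ) ^ m / (Nat.factorial m : ℝ)) ^ 2 * 2 ^ m with hA
  have hA0 : 0 ≤ A := by positivity
  have hK : 0 ≤ KK m := Real.sqrt_nonneg _
  set p := polyNorm n m ν a with hp
  have hp0 : 0 ≤ p := polyNorm_nonneg a
  have key : ‖evalC (fun α => ε α * a α) z‖ ≤ (A * p) * glWith (Coef n m) (polyNorm n m ν) := by
    rcases (mul_nonneg hA0 hp0).eq_or_lt with h0 | h0
    · have hp' : p = 0 := by
        rcases mul_eq_zero.1 h0.symm with h | h
        · exfalso
          have : 0 < A := by positivity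
          exact this.ne' h
        · exact h
      obtain ⟨C, hC, hc⟩ := hcb
      have ha : ∀ α, a α = 0 := by
        intro α
        have := hc a α
        rw [← hp, hp', mul_zero] at this
        exact norm_le_zero_iff.1 this
      rw [← h0]
      simp [evalC, ha]
    · rw [mul_comm, ← div_le_iff₀ h0]
      apply le_csInf (gl_nonempty hb hcb)
      rintro c ⟨hc0, hc⟩
      obtain ⟨Ω, _, μ, R, S, hSR, hRS⟩ := hc _ (diagT (fun α : MIdx n m => ∏ i, z i ^ α.1 i))
      rw [div_le_iff₀ h0]
      have hmain := main_bound hb hcb huncond a ε _ hε μ R S hSR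
      refine hmain.trans ?_
      have h1 := hRS.trans (mul_le_mul_of_nonneg_left (pi1_diagT hb huncond z hz) hc0)
      calc _ ≤ KK m * (c * KK m) * p := by gcongr
        _ = c * (KK m * KK m * p) := by ring
        _ ≤ c * (A * p) := by
          gcongr
          exact KK_sq m
  calc _ ≤ _ := key
    _ = _ := by ring
end
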